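/- arXiv:2308.15026 — 3 statements merged into one kernel-verified Lean document; each statement's English description precedes it below -/
import Mathlib

section
/- Let ζ ∈ (-1/2, ∞) and α ∈ (0,2). Then there exist constants c, C > 0 (depending only on ζ and α) such that for all r, s > 0: c / (|r-s|^{1+α}(r+s)^{2ζ} + (1+r+s)^{2ζ}) ≤ p_ζ^{(α)}(1,r,s) ≤ C / (|r-s|^{1+α}(r+s)^{2ζ} + (1+r+s)^{2ζ}). -/
open MeasureTheory Real Set Filter

/-- Modified Bessel function of the first kind of order `ν`. -/
noncomputable def besselI (ν x : ℝ) : ℝ :=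
  ∑' k : ℕ, (x / 2) ^ (2 * (k : ℝ) + ν) / ((Nat.factorial k : ℝ) * Real.Gamma ((k : ℝ) + ν + 1))

/-- The Bessel heat kernel `p_ζ^{(2)}(t,r,s)`. -/
noncomputable def besselHeat (ζ t r s : ℝ) : ℝ :=
  (r * s) ^ ((1 : ℝ) / 2 - ζ) / (2 * t) * Real.exp (-(r ^ 2 + s ^ 2) / (4 * t)) *
    besselI (ζ - 1 / 2) (r * s / (2 * t))

/-- `σ` is a family of `α/2`-stable subordinator densities. -/
def IsStableSubordinatorDensity (α : ℝ) (σ : ℝ → ℝ → ℝ) : Prop :=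
  (∀ t, 0 < t → ∀ τ, 0 < τ → 0 ≤ σ t τ) ∧
  (∀ t, 0 < t → Measurable (σ t)) ∧
  (∀ t l : ℝ, 0 < t → 0 ≤ l →
    (∫ τ in Ioi (0 : ℝ), Real.exp (-τ * l) * σ t τ) = Real.exp (-t * l ^ (α / 2)))

/-- The `α/2`-subordinated Bessel heat kernel `p_ζ^{(α)}(t,r,s)`. -/
noncomputable def subKernel (ζ : ℝ) (σ : ℝ → ℝ → ℝ) (t r s : ℝ) : ℝ :=
  ∫ τ in Ioi (0 : ℝ), besselHeat ζ τ r s * σ t τ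

theorem exists_bounds_of_tendsto_pos {u : ℕ → ℝ} {a : ℝ} (hu : ∀ n, 0 < u n) (ha : 0 < a)
    (h : Tendsto u atTop (nhds a)) : ∃ c C : ℝ, 0 < c ∧ 0 < C ∧ ∀ n, c ≤ u n ∧ u n ≤ C := by
  obtain ⟨C, hC⟩ := h.bddAbove_range
  obtain ⟨D, hD⟩ := (h.inv₀ ha.ne').bddAbove_range
  have hC' : ∀ n, u n ≤ C := fun n => hC ⟨n, rfl⟩
  have hD' : ∀ n, (u n)⁻¹ ≤ D := fun n => hD ⟨n, rfl⟩
  have hDpos : 0 < D := (inv_pos.2 (hu 0)).trans_le (hD' 0)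
  exact ⟨D⁻¹, C, inv_pos.2 hDpos, (hu 0).trans_le (hC' 0), fun n =>
    ⟨inv_le_of_inv_le₀ (hu n) (hD' n), hC' n⟩⟩

theorem prod_range_add_eq_Gamma_div {s : ℝ} (hs : 0 < s) (n : ℕ) :
    ∏ j ∈ Finset.range n, (s + j) = Gamma (s + n) / Gamma s := by
  have := (Gamma_pos_of_pos hs).ne'
  induction n with
  | zero => simp [this]
  | succ n ih =>
    rw [Finset.prod_range_succ, ih]
    push_cast
    rw [← add_assoc, Gamma_add_one (by positivity)]
    ring

/-- `Γ(k + s)` is comparable to `(k + 1) ^ (s - 1) * k!`. -/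
theorem exists_Gamma_bounds {s : ℝ} (hs : 0 < s) :
    ∃ c C : ℝ, 0 < c ∧ 0 < C ∧ ∀ k : ℕ,
      c * (((k : ℝ) + 1) ^ (s - 1) * k.factorial) ≤ Gamma (k + s) ∧
      Gamma (k + s) ≤ C * (((k : ℝ) + 1) ^ (s - 1) * k.factorial) := by
  have hG := Gamma_pos_of_pos hs
  have hpos : ∀ k : ℕ, 0 < ((k : ℝ) + 1) ^ (s - 1) * k.factorial := fun k => by positivity
  have hlim : Tendsto (fun k : ℕ => Gamma (k + s) / (((k : ℝ) + 1) ^ (s - 1) * k.factorial))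
      atTop (nhds 1) := by
    have h1 : Tendsto (fun k : ℕ => Gamma s / GammaSeq s k) atTop (nhds 1) := by
      have := (tendsto_const_nhds (x := Gamma s) (f := atTop (α := ℕ))).div
        (GammaSeq_tendsto_Gamma s) hG.ne'
      rwa [div_self hG.ne'] at this
    have h2 : Tendsto (fun k : ℕ => ((k : ℝ) / (k + 1)) ^ s) atTop (nhds 1) := by
      simpa using (tendsto_natCast_div_add_atTop (1 : ℝ)).rpow_const (p := s) (by simp)
    have h3 : Tendsto (fun k : ℕ => ((k : ℝ) / (k + s))) atTop (nhds 1) :=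
      tendsto_natCast_div_add_atTop s
    have h4 : Tendsto (fun k : ℕ => ((k : ℝ) / (k + 1))⁻¹) atTop (nhds 1) := by
      simpa using (tendsto_natCast_div_add_atTop (1 : ℝ)).inv₀ one_ne_zero
    have := ((h1.mul h2).mul h3).mul h4
    simp only [mul_one] at this
    refine this.congr' ?_
    filter_upwards [eventually_gt_atTop 0] with k hk
    have hk' : (0 : ℝ) < k := by exact_mod_cast hk
    have hGk := Gamma_pos_of_pos (show 0 < (k : ℝ) + s by positivity)
    rw [GammaSeq, prod_range_add_eq_Gamma_div hs, div_rpow hk'.le (by positivity),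
      rpow_sub_one (by positivity)]
    push_cast
    rw [← add_assoc, Gamma_add_one (by positivity), add_comm s]
    field_simp
  obtain ⟨c, C, hc, hC, h⟩ := exists_bounds_of_tendsto_pos
    (fun k => div_pos (Gamma_pos_of_pos (by positivity)) (hpos k)) one_pos hlim
  exact ⟨c, C, hc, hC, fun k => ⟨(le_div_iff₀ (hpos k)).1 (h k).1, (div_le_iff₀ (hpos k)).1 (h k).2⟩⟩

theorem tsum_even_add_le_exp {x : ℝ} (hx : 0 ≤ x) (m : ℕ) :
    Summable (fun k : ℕ => x ^ (2 * k + m) / ((2 * k + m).factorial : ℝ)) ∧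
      ∑' k : ℕ, x ^ (2 * k + m) / ((2 * k + m).factorial : ℝ) ≤ exp x := by
  have hinj : Function.Injective (fun k : ℕ => 2 * k + m) := fun a b h => by
    simp only at h; omega
  refine ⟨(summable_pow_div_factorial x).comp_injective hinj, ?_⟩
  have hs := NormedSpace.expSeries_div_hasSum_exp x
  rw [← Real.exp_eq_exp_ℝ] at hs
  rw [← hs.tsum_eq]
  exact tsum_comp_le_tsum_of_inj (summable_pow_div_factorial x) (fun _ => by positivity) hinj
theorem exists_tsum_even_mul_pow_le (m : ℕ) : ∃ C : ℝ, 0 < C ∧ ∀ x : ℝ, 0 < x →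
    Summable (fun k : ℕ => x ^ (2 * k) / ((2 * k).factorial : ℝ) * ((1 + x) / (k + 1)) ^ m) ∧
      ∑' k : ℕ, x ^ (2 * k) / ((2 * k).factorial : ℝ) * ((1 + x) / (k + 1)) ^ m ≤ C * exp x := by
  set B : ℝ := (2 * (m + 2)) ^ m with hB
  have hBpos : 0 < B := by positivity
  refine ⟨B * 2, by positivity, fun x hx => ?_⟩
  obtain ⟨s0, h0⟩ := tsum_even_add_le_exp hx.le 0
  obtain ⟨s1, h1⟩ := tsum_even_add_le_exp hx.le m
  simp only [add_zero] at s0 h0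
  have hle : ∀ k : ℕ, x ^ (2 * k) / ((2 * k).factorial : ℝ) * ((1 + x) / (k + 1)) ^ m ≤
      B * (x ^ (2 * k) / ((2 * k).factorial : ℝ) +
        x ^ (2 * k + m) / ((2 * k + m).factorial : ℝ)) := by
    intro k
    have hk : (0 : ℝ) ≤ k := k.cast_nonneg
    rcases le_total x 1 with hx1 | hx1
    · have : ((1 + x) / (k + 1)) ^ m ≤ B := by
        refine pow_le_pow_left₀ (by positivity) ?_ m
        rw [div_le_iff₀ (by positivity)]
        have : (0 : ℝ) ≤ m := m.cast_nonneg
        nlinarith [mul_nonneg this hk]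
      calc _ ≤ x ^ (2 * k) / ((2 * k).factorial : ℝ) * B := by gcongr
        _ ≤ _ := by
          have : 0 ≤ B * (x ^ (2 * k + m) / ((2 * k + m).factorial : ℝ)) := by positivity
          linarith
    · have hf : ((2 * k + m).factorial : ℝ) ≤
          ((2 * k).factorial : ℝ) * ((m + 2) * (k + 1)) ^ m := by
        rw [← Nat.factorial_mul_ascFactorial, Nat.cast_mul]
        gcongr
        have : (((2 * k + 1).ascFactorial m : ℕ) : ℝ) ≤ ((2 * k + m : ℕ) : ℝ) ^ m := by
          exact_mod_cast Nat.ascFactorial_le_pow_add (2 * k) m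
        refine this.trans (pow_le_pow_left₀ (by positivity) ?_ m)
        have : (0 : ℝ) ≤ m := m.cast_nonneg
        push_cast
        nlinarith [mul_nonneg this hk]
      have : x ^ (2 * k) / ((2 * k).factorial : ℝ) * ((1 + x) / (k + 1)) ^ m ≤
          B * (x ^ (2 * k + m) / ((2 * k + m).factorial : ℝ)) := by
        calc _ ≤ x ^ (2 * k) / ((2 * k).factorial : ℝ) * ((2 * x) / (k + 1)) ^ m := by
              gcongr; linarith
          _ = B * (x ^ (2 * k + m) /
                (((2 * k).factorial : ℝ) * ((m + 2) * (k + 1)) ^ m)) := by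
              rw [hB, div_pow, mul_pow, mul_pow, mul_pow, pow_add]
              field_simp
          _ ≤ _ := by gcongr
      have h' : 0 ≤ B * (x ^ (2 * k) / ((2 * k).factorial : ℝ)) := by positivity
      linarith
  have hs := (s0.add s1).mul_left B
  have hsum := Summable.of_nonneg_of_le (fun k => by positivity) hle hs
  refine ⟨hsum, (hsum.tsum_le_tsum hle hs).trans ?_⟩
  rw [tsum_mul_left, s0.tsum_add s1]
  nlinarith

theorem tsum_even_mul_inv_le {x : ℝ} (hx : 0 < x) :
    Summable (fun k : ℕ => x ^ (2 * k) / ((2 * k).factorial : ℝ) * ((1 + x) / (k + 1))⁻¹) ∧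
      ∑' k : ℕ, x ^ (2 * k) / ((2 * k).factorial : ℝ) * ((1 + x) / (k + 1))⁻¹ ≤ exp x := by
  have h1 : HasSum (fun k : ℕ => x ^ (2 * k) / ((2 * k).factorial : ℝ) * k)
      (x / 2 * sinh x) := by
    have := (hasSum_nat_add_iff (f := fun k : ℕ => x ^ (2 * k) / ((2 * k).factorial : ℝ) * k)
      (g := x / 2 * sinh x) 1).1 ?_
    · simpa using this
    · refine ((hasSum_sinh x).mul_left (x / 2)).congr_fun ?_
      intro k
      rw [show 2 * (k + 1) = 2 * k + 1 + 1 by ring, Nat.factorial_succ (2 * k + 1)]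
      push_cast
      field_simp
      ring
  have h2 := (h1.add (hasSum_cosh x)).div_const (1 + x)
  have h3 : HasSum (fun k : ℕ => x ^ (2 * k) / ((2 * k).factorial : ℝ) * ((1 + x) / (k + 1))⁻¹)
      ((x / 2 * sinh x + cosh x) / (1 + x)) := by
    refine h2.congr_fun fun k => ?_
    field_simp
  refine ⟨h3.summable, ?_⟩
  rw [h3.tsum_eq, div_le_iff₀ (by positivity), sinh_eq, cosh_eq]
  have := exp_pos (-x)
  have h4 : exp (-x) ≤ exp x := exp_le_exp.2 (by linarith)
  nlinarith [mul_pos hx this, mul_pos hx (exp_pos x)]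

theorem one_sub_le_rpow {L y : ℝ} (q : ℝ) (hL : 1 ≤ L) (hy : 0 < y) :
    L ^ (-|q|) * (1 - y / L - y⁻¹ / L) ≤ y ^ q := by
  have hL0 : 0 < L := by linarith
  by_cases h1 : L < y
  · have : 1 ≤ y / L := (one_le_div hL0).2 h1.le
    have : 0 ≤ y⁻¹ / L := by positivity
    exact (mul_nonpos_of_nonneg_of_nonpos (by positivity) (by linarith)).trans (by positivity)
  by_cases h2 : L < y⁻¹
  · have : 1 ≤ y⁻¹ / L := (one_le_div hL0).2 h2.le
    have : 0 ≤ y / L := by positivity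
    exact (mul_nonpos_of_nonneg_of_nonpos (by positivity) (by linarith)).trans (by positivity)
  push Not at h1 h2
  have h3 : L ^ (-|q|) ≤ y ^ q := by
    rcases le_total 0 q with hq | hq
    · rw [abs_of_nonneg hq, rpow_neg hL0.le, ← inv_rpow hL0.le]
      exact rpow_le_rpow (by positivity) (inv_le_of_inv_le₀ hy h2) hq
    · rw [abs_of_nonpos hq, neg_neg]
      exact rpow_le_rpow_of_nonpos hy h1 hq
  have : 1 - y / L - y⁻¹ / L ≤ 1 := by
    have : 0 ≤ y⁻¹ / L := by positivity
    have : 0 ≤ y / L := by positivity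
    linarith
  calc _ ≤ L ^ (-|q|) * 1 := by gcongr
    _ ≤ _ := by rwa [mul_one]

theorem rpow_le_inv_add_pow {y q : ℝ} {m : ℕ} (hy : 0 < y) (hq : -1 ≤ q) (hm : q ≤ m) :
    y ^ q ≤ y⁻¹ + y ^ m := by
  rcases le_total y 1 with h | h
  · have : y ^ q ≤ y ^ (-1 : ℝ) := rpow_le_rpow_of_exponent_ge hy h hq
    rw [rpow_neg_one] at this
    have := pow_pos hy m
    linarith
  · have : y ^ q ≤ y ^ (m : ℝ) := rpow_le_rpow_of_exponent_le h hm
    rw [rpow_natCast] at this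
    have := inv_pos.2 hy
    linarith

theorem exists_tsum_even_bounds {q : ℝ} (hq : -1 ≤ q) : ∃ c C : ℝ, 0 < c ∧ 0 < C ∧
    ∀ x : ℝ, 0 < x →
      Summable (fun k : ℕ => x ^ (2 * k) / ((2 * k).factorial : ℝ) * ((k : ℝ) + 1) ^ (-q)) ∧
      c * ((1 + x) ^ (-q) * exp x) ≤
        ∑' k : ℕ, x ^ (2 * k) / ((2 * k).factorial : ℝ) * ((k : ℝ) + 1) ^ (-q) ∧
      ∑' k : ℕ, x ^ (2 * k) / ((2 * k).factorial : ℝ) * ((k : ℝ) + 1) ^ (-q) ≤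
        C * ((1 + x) ^ (-q) * exp x) := by
  obtain ⟨C1, hC1, H1⟩ := exists_tsum_even_mul_pow_le 1
  obtain ⟨Cm, hCm, Hm⟩ := exists_tsum_even_mul_pow_le ⌈q⌉₊
  set L : ℝ := 4 * (C1 + 1) with hL
  have hL1 : 1 ≤ L := by linarith
  have hL0 : 0 < L := by linarith
  refine ⟨L ^ (-|q|) / 4, 1 + Cm, by positivity, by positivity, fun x hx => ?_⟩
  obtain ⟨s1, h1⟩ := H1 x hx
  obtain ⟨sm, hm⟩ := Hm x hx
  obtain ⟨si, hi⟩ := tsum_even_mul_inv_le hx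
  have s0 := (hasSum_cosh x).summable
  have hfun : (fun k : ℕ => x ^ (2 * k) / ((2 * k).factorial : ℝ) * ((k : ℝ) + 1) ^ (-q)) =
      fun k : ℕ => (1 + x) ^ (-q) *
        (x ^ (2 * k) / ((2 * k).factorial : ℝ) * ((1 + x) / (k + 1)) ^ q) := by
    funext k
    rw [div_rpow (by positivity) (by positivity), rpow_neg (by positivity),
      rpow_neg (by positivity)]
    field_simp
  have hupper : ∀ k : ℕ, x ^ (2 * k) / ((2 * k).factorial : ℝ) * ((1 + x) / (k + 1)) ^ q ≤
      x ^ (2 * k) / ((2 * k).factorial : ℝ) * ((1 + x) / (k + 1))⁻¹ +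
        x ^ (2 * k) / ((2 * k).factorial : ℝ) * ((1 + x) / (k + 1)) ^ ⌈q⌉₊ := by
    intro k
    rw [← mul_add]
    gcongr
    exact rpow_le_inv_add_pow (by positivity) hq (Nat.le_ceil q)
  have hs : Summable fun k : ℕ =>
      x ^ (2 * k) / ((2 * k).factorial : ℝ) * ((1 + x) / (k + 1)) ^ q :=
    Summable.of_nonneg_of_le (fun k => by positivity) hupper (si.add sm)
  have hE := exp_pos x
  rw [hfun]
  refine ⟨hs.mul_left _, ?_, ?_⟩
  · rw [tsum_mul_left, mul_left_comm]
    gcongr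
    have hslow := ((s0.sub (s1.div_const L)).sub (si.div_const L)).mul_left (L ^ (-|q|))
    have hlow := hslow.tsum_le_tsum (fun k => ?_) hs
    · refine le_trans ?_ hlow
      rw [tsum_mul_left, (s0.sub (s1.div_const L)).tsum_sub (si.div_const L),
        s0.tsum_sub (s1.div_const L), tsum_div_const, tsum_div_const, (hasSum_cosh x).tsum_eq,
        div_mul_eq_mul_div, mul_div_assoc]
      gcongr
      rw [sub_sub, ← add_div]
      have : exp x / 2 ≤ cosh x := by rw [cosh_eq]; linarith [exp_pos (-x)]
      have h' : ((∑' k : ℕ, x ^ (2 * k) / ((2 * k).factorial : ℝ) * ((1 + x) / (k + 1)) ^ 1) +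
          ∑' k : ℕ, x ^ (2 * k) / ((2 * k).factorial : ℝ) * ((1 + x) / (k + 1))⁻¹) / L ≤
          exp x / 4 := by
        rw [div_le_iff₀ hL0, hL]
        linarith
      linarith
    · have := one_sub_le_rpow q hL1 (show 0 < (1 + x) / ((k : ℝ) + 1) by positivity)
      have h2 := mul_le_mul_of_nonneg_left this
        (show 0 ≤ x ^ (2 * k) / ((2 * k).factorial : ℝ) by positivity)
      refine le_trans (le_of_eq ?_) h2
      rw [pow_one]
      ring
  · rw [tsum_mul_left, mul_left_comm]
    gcongr
    refine (hs.tsum_le_tsum hupper (si.add sm)).trans ?_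
    rw [si.tsum_add sm]
    linarith
theorem factorial_mul_Gamma_add_half (k : ℕ) :
    (k.factorial : ℝ) * Gamma (k + 1 / 2) = (2 * k).factorial / 4 ^ k * √π := by
  have h := Gamma_mul_Gamma_add_half ((k : ℝ) + 1 / 2)
  rw [show (k : ℝ) + 1 / 2 + 1 / 2 = k + 1 by ring, Gamma_nat_eq_factorial,
    show 2 * ((k : ℝ) + 1 / 2) = ((2 * k : ℕ) : ℝ) + 1 by push_cast; ring,
    Gamma_nat_eq_factorial] at h
  rw [mul_comm, h, show (1 : ℝ) - (((2 * k : ℕ) : ℝ) + 1) = -((2 * k : ℕ) : ℝ) by ring,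
    rpow_neg (by norm_num), rpow_natCast, pow_mul,
    show (2 : ℝ) ^ 2 = 4 by norm_num]
  ring

/-- Terms of the Bessel series of order `ζ - 1 / 2` against those of the `cosh` series. -/
theorem exists_besselI_term_bounds {ζ : ℝ} (hζ : -1 / 2 < ζ) : ∃ c C : ℝ, 0 < c ∧ 0 < C ∧
    ∀ x : ℝ, 0 < x → ∀ k : ℕ,
      c * ((x / 2) ^ (ζ - 1 / 2) *
          (x ^ (2 * k) / ((2 * k).factorial : ℝ) * ((k : ℝ) + 1) ^ (-ζ))) ≤
        (x / 2) ^ (2 * (k : ℝ) + (ζ - 1 / 2)) /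
          ((Nat.factorial k : ℝ) * Gamma ((k : ℝ) + (ζ - 1 / 2) + 1)) ∧
      (x / 2) ^ (2 * (k : ℝ) + (ζ - 1 / 2)) /
          ((Nat.factorial k : ℝ) * Gamma ((k : ℝ) + (ζ - 1 / 2) + 1)) ≤
        C * ((x / 2) ^ (ζ - 1 / 2) *
          (x ^ (2 * k) / ((2 * k).factorial : ℝ) * ((k : ℝ) + 1) ^ (-ζ))) := by
  obtain ⟨a, A, ha, hA, hab⟩ := exists_Gamma_bounds (show (0 : ℝ) < 1 / 2 by norm_num)
  obtain ⟨b, B, hb, hB, hbb⟩ := exists_Gamma_bounds (show (0 : ℝ) < ζ + 1 / 2 by linarith)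
  have hpi : 0 < √π := sqrt_pos.2 pi_pos
  refine ⟨a / (B * √π), A / (b * √π), by positivity, by positivity, fun x hx k => ?_⟩
  obtain ⟨h1, h2⟩ := hab k
  obtain ⟨h3, h4⟩ := hbb k
  rw [show (k : ℝ) + (ζ - 1 / 2) + 1 = k + (ζ + 1 / 2) by ring]
  have hG : 0 < Gamma ((k : ℝ) + (ζ + 1 / 2)) :=
    Gamma_pos_of_pos (by have : (0 : ℝ) ≤ k := k.cast_nonneg; linarith)
  have hG2 : 0 < Gamma ((k : ℝ) + 1 / 2) := Gamma_pos_of_pos (by positivity)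
  have hterm : (x / 2) ^ (2 * (k : ℝ) + (ζ - 1 / 2)) /
      ((Nat.factorial k : ℝ) * Gamma ((k : ℝ) + (ζ + 1 / 2))) =
      (x / 2) ^ (ζ - 1 / 2) * (x ^ (2 * k) / ((2 * k).factorial : ℝ)) *
        (Gamma (k + 1 / 2) / Gamma ((k : ℝ) + (ζ + 1 / 2)) / √π) := by
    have h := factorial_mul_Gamma_add_half k
    have hfac : (0 : ℝ) < (2 * k).factorial := by positivity
    have hfac' : (0 : ℝ) < k.factorial := by positivity
    have h4 : ((2 * k).factorial : ℝ) = (k.factorial : ℝ) * Gamma (k + 1 / 2) * 4 ^ k / √π := by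
      rw [h]; field_simp
    rw [h4, rpow_add (by positivity), show (2 * (k : ℝ)) = ((2 * k : ℕ) : ℝ) by push_cast; ring,
      rpow_natCast, div_pow, pow_mul 2 2 k]
    norm_num
    field_simp
  have hpow : ((k : ℝ) + 1) ^ (-ζ) =
      ((k : ℝ) + 1) ^ ((1 : ℝ) / 2 - 1) / ((k : ℝ) + 1) ^ (ζ + 1 / 2 - 1) := by
    rw [← rpow_sub (by positivity)]; congr 1; ring
  have hp1 : 0 < ((k : ℝ) + 1) ^ ((1 : ℝ) / 2 - 1) := by positivity
  have hp2 : 0 < ((k : ℝ) + 1) ^ (ζ + 1 / 2 - 1) := by positivity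
  have hfac' : (0 : ℝ) < k.factorial := by positivity
  rw [hterm]
  constructor
  · calc _ = (x / 2) ^ (ζ - 1 / 2) * (x ^ (2 * k) / ((2 * k).factorial : ℝ)) *
          (a * (((k : ℝ) + 1) ^ ((1 : ℝ) / 2 - 1) * k.factorial) /
            (B * (((k : ℝ) + 1) ^ (ζ + 1 / 2 - 1) * k.factorial)) / √π) := by
          rw [hpow]; field_simp
      _ ≤ _ := by gcongr
  · calc _ ≤ (x / 2) ^ (ζ - 1 / 2) * (x ^ (2 * k) / ((2 * k).factorial : ℝ)) *
          (A * (((k : ℝ) + 1) ^ ((1 : ℝ) / 2 - 1) * k.factorial) /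
            (b * (((k : ℝ) + 1) ^ (ζ + 1 / 2 - 1) * k.factorial)) / √π) := by gcongr
      _ = _ := by rw [hpow]; field_simp

theorem besselI_term_nonneg {ζ x : ℝ} (hζ : -1 / 2 < ζ) (hx : 0 < x) (k : ℕ) :
    0 ≤ (x / 2) ^ (2 * (k : ℝ) + (ζ - 1 / 2)) /
      ((Nat.factorial k : ℝ) * Gamma ((k : ℝ) + (ζ - 1 / 2) + 1)) := by
  have : 0 < Gamma ((k : ℝ) + (ζ - 1 / 2) + 1) :=
    Gamma_pos_of_pos (by have : (0 : ℝ) ≤ k := k.cast_nonneg; linarith)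
  positivity

theorem summable_besselI {ζ x : ℝ} (hζ : -1 / 2 < ζ) (hx : 0 < x) :
    Summable fun k : ℕ => (x / 2) ^ (2 * (k : ℝ) + (ζ - 1 / 2)) /
      ((Nat.factorial k : ℝ) * Gamma ((k : ℝ) + (ζ - 1 / 2) + 1)) := by
  obtain ⟨_, C, _, _, h⟩ := exists_besselI_term_bounds hζ
  obtain ⟨_, _, _, _, h'⟩ := exists_tsum_even_bounds (show -1 ≤ ζ by linarith)
  exact Summable.of_nonneg_of_le (besselI_term_nonneg hζ hx) (fun k => (h x hx k).2)
    (((h' x hx).1.mul_left _).mul_left _)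

theorem exists_besselI_bounds {ζ : ℝ} (hζ : -1 / 2 < ζ) : ∃ c C : ℝ, 0 < c ∧ 0 < C ∧
    ∀ x : ℝ, 0 < x →
      c * (x ^ (ζ - 1 / 2) * (1 + x) ^ (-ζ) * exp x) ≤ besselI (ζ - 1 / 2) x ∧
      besselI (ζ - 1 / 2) x ≤ C * (x ^ (ζ - 1 / 2) * (1 + x) ^ (-ζ) * exp x) := by
  obtain ⟨c, C, hc, hC, h⟩ := exists_besselI_term_bounds hζ
  obtain ⟨d, D, hd, hD, h'⟩ := exists_tsum_even_bounds (show -1 ≤ ζ by linarith)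
  have h2 : (0 : ℝ) < 2 ^ (ζ - 1 / 2) := by positivity
  refine ⟨c * d / 2 ^ (ζ - 1 / 2), C * D / 2 ^ (ζ - 1 / 2), by positivity, by positivity,
    fun x hx => ?_⟩
  obtain ⟨hs, hl, hu⟩ := h' x hx
  have hs' := hs.mul_left ((x / 2) ^ (ζ - 1 / 2))
  have hb := summable_besselI hζ hx
  constructor
  · refine le_trans ?_ ((hs'.mul_left c).tsum_le_tsum (fun k => (h x hx k).1) hb)
    rw [tsum_mul_left, tsum_mul_left]
    refine le_trans (le_of_eq ?_) (mul_le_mul_of_nonneg_left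
      (mul_le_mul_of_nonneg_left hl (by positivity)) hc.le)
    rw [div_rpow hx.le (by norm_num)]
    ring
  · refine (hb.tsum_le_tsum (fun k => (h x hx k).2) (hs'.mul_left C)).trans ?_
    rw [tsum_mul_left, tsum_mul_left]
    refine (mul_le_mul_of_nonneg_left
      (mul_le_mul_of_nonneg_left hu (by positivity)) hC.le).trans (le_of_eq ?_)
    rw [div_rpow hx.le (by norm_num)]
    ring

/-- The elementary function comparable to the Bessel heat kernel. -/
noncomputable def heatProfile (ζ X A τ : ℝ) : ℝ :=
  τ ^ (-(1 / 2 : ℝ)) * (2 * τ + X) ^ (-ζ) * exp (-A / (4 * τ))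

theorem exists_besselHeat_bounds {ζ : ℝ} (hζ : -1 / 2 < ζ) : ∃ c C : ℝ, 0 < c ∧ 0 < C ∧
    ∀ τ r s : ℝ, 0 < τ → 0 < r → 0 < s →
      c * heatProfile ζ (r * s) ((r - s) ^ 2) τ ≤ besselHeat ζ τ r s ∧
      besselHeat ζ τ r s ≤ C * heatProfile ζ (r * s) ((r - s) ^ 2) τ := by
  obtain ⟨c, C, hc, hC, h⟩ := exists_besselI_bounds hζ
  refine ⟨c * 2 ^ (-(1 / 2 : ℝ)), C * 2 ^ (-(1 / 2 : ℝ)), by positivity, by positivity,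
    fun τ r s hτ hr hs => ?_⟩
  have hX : 0 < r * s := mul_pos hr hs
  obtain ⟨hl, hu⟩ := h (r * s / (2 * τ)) (by positivity)
  have key : (r * s) ^ ((1 : ℝ) / 2 - ζ) / (2 * τ) * exp (-(r ^ 2 + s ^ 2) / (4 * τ)) *
      ((r * s / (2 * τ)) ^ (ζ - 1 / 2) * (1 + r * s / (2 * τ)) ^ (-ζ) *
        exp (r * s / (2 * τ))) =
      2 ^ (-(1 / 2 : ℝ)) * heatProfile ζ (r * s) ((r - s) ^ 2) τ := by
    have e1 : exp (-(r ^ 2 + s ^ 2) / (4 * τ)) * exp (r * s / (2 * τ)) =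
        exp (-(r - s) ^ 2 / (4 * τ)) := by
      rw [← exp_add]; congr 1; field_simp; ring
    have e2 : (r * s / (2 * τ)) ^ (ζ - 1 / 2) =
        (r * s) ^ (ζ - 1 / 2) * (2 * τ) ^ (1 / 2 - ζ) := by
      rw [div_rpow hX.le (by positivity), div_eq_mul_inv, ← rpow_neg (by positivity)]
      congr 2; ring
    have e3 : (1 + r * s / (2 * τ)) ^ (-ζ) = (2 * τ + r * s) ^ (-ζ) * (2 * τ) ^ ζ := by
      rw [show 1 + r * s / (2 * τ) = (2 * τ + r * s) / (2 * τ) by field_simp,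
        div_rpow (by positivity) (by positivity), rpow_neg (by positivity : 0 ≤ 2 * τ)]
      field_simp
    have e4 : (r * s) ^ ((1 : ℝ) / 2 - ζ) * (r * s) ^ (ζ - 1 / 2) = 1 := by
      rw [← rpow_add hX]; simp
    have e5 : (2 * τ) ^ (1 / 2 - ζ) * (2 * τ) ^ ζ / (2 * τ) =
        2 ^ (-(1 / 2 : ℝ)) * τ ^ (-(1 / 2 : ℝ)) := by
      rw [← rpow_add (by positivity), ← mul_rpow (by norm_num) hτ.le,
        ← rpow_sub_one (by positivity)]
      congr 1; ring
    rw [e2, e3, heatProfile, ← e1]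
    calc _ = ((r * s) ^ ((1 : ℝ) / 2 - ζ) * (r * s) ^ (ζ - 1 / 2)) *
          ((2 * τ) ^ (1 / 2 - ζ) * (2 * τ) ^ ζ / (2 * τ)) * (2 * τ + r * s) ^ (-ζ) *
          (exp (-(r ^ 2 + s ^ 2) / (4 * τ)) * exp (r * s / (2 * τ))) := by ring
      _ = _ := by rw [e4, e5]; ring
  have hP : 0 ≤ (r * s) ^ ((1 : ℝ) / 2 - ζ) / (2 * τ) *
      exp (-(r ^ 2 + s ^ 2) / (4 * τ)) := by positivity
  rw [mul_assoc c, mul_assoc C, ← key, besselHeat]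
  exact ⟨by have := mul_le_mul_of_nonneg_left hl hP; linarith,
    by have := mul_le_mul_of_nonneg_left hu hP; linarith⟩

theorem aestronglyMeasurable_besselHeat {ζ r s : ℝ} (hζ : -1 / 2 < ζ) (hr : 0 < r)
    (hs : 0 < s) :
    AEStronglyMeasurable (fun τ => besselHeat ζ τ r s) (volume.restrict (Ioi 0)) := by
  have hI : AEStronglyMeasurable (fun τ => besselI (ζ - 1 / 2) (r * s / (2 * τ)))
      (volume.restrict (Ioi 0)) := by
    refine aestronglyMeasurable_of_tendsto_ae atTop (f := fun (n : ℕ) τ =>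
      ∑ k ∈ Finset.range n, (r * s / (2 * τ) / 2) ^ (2 * (k : ℝ) + (ζ - 1 / 2)) /
        ((Nat.factorial k : ℝ) * Gamma ((k : ℝ) + (ζ - 1 / 2) + 1))) (fun n => ?_) ?_
    · exact Measurable.aestronglyMeasurable (by fun_prop)
    · filter_upwards [ae_restrict_mem measurableSet_Ioi] with τ hτ
      have hτ' : 0 < τ := hτ
      exact (summable_besselI hζ (show 0 < r * s / (2 * τ) by positivity)).hasSum.tendsto_sum_nat
  unfold besselHeat
  exact (Measurable.aestronglyMeasurable (by fun_prop)).mul hI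
namespace IsStableSubordinatorDensity

variable {α : ℝ} {σ : ℝ → ℝ → ℝ}

theorem integrable_exp (hσ : IsStableSubordinatorDensity α σ) {l : ℝ} (hl : 0 ≤ l) :
    Integrable (fun τ => exp (-τ * l) * σ 1 τ) (volume.restrict (Ioi 0)) := by
  by_contra h
  have := hσ.2.2 1 l one_pos hl
  rw [integral_undef h] at this
  exact (exp_pos _).ne this

theorem integrable (hσ : IsStableSubordinatorDensity α σ) :
    Integrable (σ 1) (volume.restrict (Ioi 0)) := by
  simpa using hσ.integrable_exp le_rfl

theorem integral_eq_one (hα : 0 < α) (hσ : IsStableSubordinatorDensity α σ) :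
    ∫ τ in Ioi (0 : ℝ), σ 1 τ = 1 := by
  simpa [zero_rpow (show α / 2 ≠ 0 by positivity)] using hσ.2.2 1 0 one_pos le_rfl

theorem integrable_one_sub_exp (hσ : IsStableSubordinatorDensity α σ) {l : ℝ} (hl : 0 ≤ l) :
    Integrable (fun τ => (1 - exp (-τ * l)) * σ 1 τ) (volume.restrict (Ioi 0)) := by
  simp only [sub_mul, one_mul]
  exact hσ.integrable.sub (hσ.integrable_exp hl)

theorem integral_one_sub_exp (hα : 0 < α) (hσ : IsStableSubordinatorDensity α σ) {l : ℝ}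
    (hl : 0 ≤ l) :
    ∫ τ in Ioi (0 : ℝ), (1 - exp (-τ * l)) * σ 1 τ = 1 - exp (-l ^ (α / 2)) := by
  simp only [sub_mul, one_mul]
  rw [integral_sub hσ.integrable (hσ.integrable_exp hl), hσ.integral_eq_one hα,
    hσ.2.2 1 l one_pos hl, neg_one_mul]

theorem integrable_rpow_neg (hα : 0 < α) (hσ : IsStableSubordinatorDensity α σ) {p : ℝ}
    (hp : 0 < p) : Integrable (fun τ => τ ^ (-p) * σ 1 τ) (volume.restrict (Ioi 0)) := by
  have hmeas := hσ.2.1 1 one_pos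
  have hF : Integrable (fun z : ℝ × ℝ => z.2 ^ (p - 1) * (exp (-z.1 * z.2) * σ 1 z.1))
      ((volume.restrict (Ioi 0)).prod (volume.restrict (Ioi 0))) := by
    rw [integrable_prod_iff' (Measurable.aestronglyMeasurable (by fun_prop))]
    constructor
    · filter_upwards [ae_restrict_mem measurableSet_Ioi] with l hl
      exact (hσ.integrable_exp (le_of_lt hl)).const_mul _
    · have h := integrableOn_rpow_mul_exp_neg_rpow (s := p - 1) (p := α / 2) (by linarith)
        (by positivity)
      refine Integrable.congr h ?_
      filter_upwards [ae_restrict_mem measurableSet_Ioi] with l hl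
      have hl' : 0 < l := hl
      rw [← neg_one_mul (l ^ (α / 2)), ← hσ.2.2 1 l one_pos hl'.le, ← integral_const_mul]
      refine setIntegral_congr_fun measurableSet_Ioi fun τ hτ => ?_
      have := hσ.1 1 one_pos τ hτ
      exact (norm_of_nonneg (by positivity)).symm
  refine (hF.integral_prod_left.const_mul (Gamma p)⁻¹).congr ?_
  filter_upwards [ae_restrict_mem measurableSet_Ioi] with τ hτ
  have hτ' : 0 < τ := hτ
  have hG := (Gamma_pos_of_pos hp).ne'
  have h := integral_rpow_mul_exp_neg_mul_Ioi hp hτ'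
  simp only [← mul_assoc, neg_mul]
  rw [integral_mul_const, h, one_div, inv_rpow hτ'.le, ← rpow_neg hτ'.le]
  field_simp

theorem integrable_rpow_neg_mul_exp (hα : 0 < α) (hσ : IsStableSubordinatorDensity α σ)
    {p A : ℝ} (hp : 0 < p) (hA : 0 ≤ A) :
    Integrable (fun τ => τ ^ (-p) * exp (-A / (4 * τ)) * σ 1 τ) (volume.restrict (Ioi 0)) := by
  have hmeas := hσ.2.1 1 one_pos
  refine (hσ.integrable_rpow_neg hα hp).mono' (Measurable.aestronglyMeasurable (by fun_prop)) ?_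
  filter_upwards [ae_restrict_mem measurableSet_Ioi] with τ hτ
  have hτ' : 0 < τ := hτ
  have := hσ.1 1 one_pos τ hτ
  rw [norm_of_nonneg (by positivity)]
  have he : exp (-A / (4 * τ)) ≤ 1 := exp_le_one_iff.2
    (div_nonpos_of_nonpos_of_nonneg (by linarith) (by positivity))
  have : 0 ≤ τ ^ (-p) := by positivity
  gcongr
  nlinarith

end IsStableSubordinatorDensity

theorem rpow_neg_mul_exp_le {p x : ℝ} (hp : 0 < p) (hx : 0 < x) :
    x ^ (-p) * exp (-1 / (4 * x)) ≤ 8 * (8 * p) ^ p * (1 - exp (-x)) := by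
  have h1 : (x⁻¹) ^ p ≤ (8 * p) ^ p * exp (x⁻¹ / 8) := by
    have : x⁻¹ ≤ 8 * p * exp (x⁻¹ / 8 / p) := by
      have := add_one_le_exp (x⁻¹ / 8 / p)
      calc x⁻¹ = 8 * p * (x⁻¹ / 8 / p) := by field_simp
        _ ≤ _ := by gcongr; linarith
    calc _ ≤ (8 * p * exp (x⁻¹ / 8 / p)) ^ p := by gcongr
      _ = _ := by
        rw [mul_rpow (by positivity) (by positivity), ← exp_mul]
        congr 2; field_simp
  have h2 : 1 + x⁻¹ ≤ 8 * exp (x⁻¹ / 8) := by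
    have := add_one_le_exp (x⁻¹ / 8)
    linarith
  have h3 : 1 / (1 + x⁻¹) ≤ 1 - exp (-x) := by
    have h4 : exp (-x) ≤ 1 / (x + 1) := by
      rw [exp_neg, ← one_div]
      exact one_div_le_one_div_of_le (by positivity) (add_one_le_exp x)
    have : 1 / (1 + x⁻¹) = 1 - 1 / (x + 1) := by field_simp; ring
    linarith
  have h5 : (exp (x⁻¹ / 8) * exp (x⁻¹ / 8)) * exp (-1 / (4 * x)) = 1 := by
    rw [← exp_add, ← exp_add, exp_eq_one_iff]
    field_simp; norm_num
  have h6 : exp (x⁻¹ / 8) * exp (-1 / (4 * x)) ≤ 8 / (1 + x⁻¹) := by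
    rw [le_div_iff₀ (by positivity)]
    calc _ ≤ exp (x⁻¹ / 8) * exp (-1 / (4 * x)) * (8 * exp (x⁻¹ / 8)) := by gcongr
      _ = 8 * ((exp (x⁻¹ / 8) * exp (x⁻¹ / 8)) * exp (-1 / (4 * x))) := by ring
      _ = _ := by rw [h5, mul_one]
  rw [rpow_neg hx.le, ← inv_rpow hx.le]
  calc _ ≤ (8 * p) ^ p * exp (x⁻¹ / 8) * exp (-1 / (4 * x)) := by gcongr
    _ = (8 * p) ^ p * (exp (x⁻¹ / 8) * exp (-1 / (4 * x))) := by ring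
    _ ≤ (8 * p) ^ p * (8 / (1 + x⁻¹)) := by gcongr
    _ = 8 * (8 * p) ^ p * (1 / (1 + x⁻¹)) := by ring
    _ ≤ _ := by gcongr

theorem one_sub_exp_sub_le {K x : ℝ} (hK : 1 ≤ K) (hx : 0 < x) :
    (1 - exp (-x)) - 2 * (1 - exp (-x * K⁻¹)) - 2 / K * (1 - exp (-x * K)) ≤
      (Icc K⁻¹ K).indicator 1 x := by
  have hK0 : 0 < K := by linarith
  have he : exp (-1 : ℝ) ≤ 1 / 2 := by
    have := exp_neg_one_lt_d9; linarith
  have hx1 := exp_pos (-x)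
  have h1 : exp (-x * K⁻¹) ≤ 1 := exp_le_one_iff.2 (by
    have : 0 < x * K⁻¹ := by positivity
    linarith)
  have h2 : exp (-x * K) ≤ 1 := exp_le_one_iff.2 (by
    have : 0 < x * K := by positivity
    linarith)
  have h2' : 0 ≤ 2 / K * (1 - exp (-x * K)) := mul_nonneg (by positivity) (by linarith)
  by_cases h : x ∈ Icc K⁻¹ K
  · rw [indicator_of_mem h]
    simp only [Pi.one_apply]
    linarith
  rw [indicator_of_notMem h]
  by_cases hlt : x < K⁻¹
  · have hxx : 1 - exp (-x) ≤ x := by linarith [add_one_le_exp (-x)]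
    have hc : x * K ≤ 2 * (1 - exp (-x * K)) := by
      have hy1 : x * K < 1 := by rwa [← lt_div_iff₀ hK0, one_div]
      have hy0 : 0 < x * K := by positivity
      have : exp (-(x * K)) ≤ 1 / (x * K + 1) := by
        rw [exp_neg, ← one_div]
        exact one_div_le_one_div_of_le (by positivity) (add_one_le_exp _)
      have h' : 1 / (x * K + 1) ≤ 1 - x * K / 2 := by
        rw [div_le_iff₀ (by positivity)]
        nlinarith
      rw [neg_mul]
      linarith
    have : x ≤ 2 / K * (1 - exp (-x * K)) := by
      rw [div_mul_eq_mul_div, le_div_iff₀ hK0]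
      exact hc
    linarith
  · have hgt : K < x := by
      by_contra h'
      exact h ⟨not_lt.1 hlt, not_lt.1 h'⟩
    have : exp (-x * K⁻¹) ≤ exp (-1) := by
      refine exp_le_exp.2 ?_
      have : 1 ≤ x * K⁻¹ := by
        rw [← div_eq_mul_inv]
        exact (one_le_div hK0).2 hgt.le
      linarith
    linarith

namespace IsStableSubordinatorDensity

variable {α : ℝ} {σ : ℝ → ℝ → ℝ}

theorem exists_integral_rpow_neg_mul_exp_le (hα : 0 < α)
    (hσ : IsStableSubordinatorDensity α σ) {p : ℝ} (hp : 0 < p) :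
    ∃ C : ℝ, 0 < C ∧ ∀ A : ℝ, 0 ≤ A →
      ∫ τ in Ioi (0 : ℝ), τ ^ (-p) * exp (-A / (4 * τ)) * σ 1 τ ≤
        C * (1 + A) ^ (-p - α / 2) := by
  set N := ∫ τ in Ioi (0 : ℝ), τ ^ (-p) * σ 1 τ with hN
  have hN0 : 0 ≤ N := setIntegral_nonneg measurableSet_Ioi fun τ hτ =>
    mul_nonneg (rpow_nonneg (le_of_lt hτ) _) (hσ.1 1 one_pos τ hτ)
  set B : ℝ := 8 * (8 * p) ^ p with hB
  have hB0 : 0 < B := by positivity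
  refine ⟨(N + B) * 2 ^ (p + α / 2), by positivity, fun A hA => ?_⟩
  have hpow : ∀ y : ℝ, 0 < y → 1 + A ≤ 2 * y →
      y ^ (-p - α / 2) ≤ 2 ^ (p + α / 2) * (1 + A) ^ (-p - α / 2) := by
    intro y hy h
    calc y ^ (-p - α / 2) = 2 ^ (p + α / 2) * (2 * y) ^ (-p - α / 2) := by
          rw [mul_rpow (by norm_num) hy.le, ← mul_assoc, ← rpow_add (by norm_num)]
          simp
      _ ≤ _ := by
          gcongr 2 ^ (p + α / 2) * ?_
          exact rpow_le_rpow_of_nonpos (by positivity) h (by linarith)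
  have hint := hσ.integrable_rpow_neg_mul_exp hα hp hA
  rcases le_total A 1 with h1 | h1
  · have hle : ∫ τ in Ioi (0 : ℝ), τ ^ (-p) * exp (-A / (4 * τ)) * σ 1 τ ≤ N := by
      refine setIntegral_mono_on hint (hσ.integrable_rpow_neg hα hp) measurableSet_Ioi ?_
      intro τ hτ
      have hτ' : 0 < τ := hτ
      have hσ0 := hσ.1 1 one_pos τ hτ
      have he : exp (-A / (4 * τ)) ≤ 1 := exp_le_one_iff.2
        (div_nonpos_of_nonpos_of_nonneg (by linarith) (by positivity))
      have : 0 ≤ τ ^ (-p) := by positivity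
      gcongr
      nlinarith
    have h2 := hpow 1 one_pos (by linarith)
    rw [one_rpow] at h2
    calc _ ≤ N * 1 := by rwa [mul_one]
      _ ≤ N * (2 ^ (p + α / 2) * (1 + A) ^ (-p - α / 2)) := by gcongr
      _ ≤ (N + B) * (2 ^ (p + α / 2) * (1 + A) ^ (-p - α / 2)) := by gcongr; linarith
      _ = _ := by ring
  · have hA0 : 0 < A := by linarith
    have hle : ∫ τ in Ioi (0 : ℝ), τ ^ (-p) * exp (-A / (4 * τ)) * σ 1 τ ≤
        ∫ τ in Ioi (0 : ℝ), A ^ (-p) * B * ((1 - exp (-τ * A⁻¹)) * σ 1 τ) := by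
      refine setIntegral_mono_on hint
        ((hσ.integrable_one_sub_exp (by positivity)).const_mul _) measurableSet_Ioi ?_
      intro τ hτ
      have hτ' : 0 < τ := hτ
      have hσ0 := hσ.1 1 one_pos τ hτ
      rw [← mul_assoc]
      refine mul_le_mul_of_nonneg_right ?_ hσ0
      have h := rpow_neg_mul_exp_le hp (show 0 < τ * A⁻¹ by positivity)
      rw [mul_rpow hτ'.le (by positivity)] at h
      have h' := mul_le_mul_of_nonneg_left h (show 0 ≤ A ^ (-p) by positivity)
      have e1 : A ^ (-p) * A⁻¹ ^ (-p) = 1 := by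
        rw [← mul_rpow hA (by positivity), mul_inv_cancel₀ hA0.ne', one_rpow]
      calc _ = (A ^ (-p) * A⁻¹ ^ (-p)) * (τ ^ (-p) * exp (-A / (4 * τ))) := by
            rw [e1, one_mul]
        _ = A ^ (-p) * (τ ^ (-p) * A⁻¹ ^ (-p) * exp (-1 / (4 * (τ * A⁻¹)))) := by
            rw [show -1 / (4 * (τ * A⁻¹)) = -A / (4 * τ) by field_simp]; ring
        _ ≤ _ := h'
        _ = _ := by rw [hB, neg_mul]; ring
    refine hle.trans ?_
    rw [integral_const_mul, hσ.integral_one_sub_exp hα (by positivity)]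
    have h2 : 1 - exp (-A⁻¹ ^ (α / 2)) ≤ A ^ (-(α / 2)) := by
      have := add_one_le_exp (-A⁻¹ ^ (α / 2))
      rw [inv_rpow hA, ← rpow_neg hA] at *
      linarith
    calc _ ≤ A ^ (-p) * B * A ^ (-(α / 2)) := by gcongr
      _ = B * A ^ (-p - α / 2) := by
        rw [sub_eq_add_neg, rpow_add hA0]; ring
      _ ≤ B * (2 ^ (p + α / 2) * (1 + A) ^ (-p - α / 2)) := by
        gcongr; exact hpow A hA0 (by linarith)
      _ ≤ (N + B) * (2 ^ (p + α / 2) * (1 + A) ^ (-p - α / 2)) := by gcongr; linarith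
      _ = _ := by ring

theorem exists_le_integral_Icc (hα : 0 < α) (hα2 : α < 2)
    (hσ : IsStableSubordinatorDensity α σ) :
    ∃ c K : ℝ, 0 < c ∧ 1 ≤ K ∧ ∀ R : ℝ, 1 ≤ R →
      c * R ^ (-(α / 2)) ≤ ∫ τ in Ioi (0 : ℝ), (Icc K⁻¹ K).indicator 1 (τ / R) * σ 1 τ := by
  obtain ⟨K, hK1, hK2, hK3⟩ : ∃ K : ℝ, 1 ≤ K ∧ K ^ (-(α / 2)) < 1 / 16 ∧
      K ^ (-(1 - α / 2)) < 1 / 16 := by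
    have h1 := (tendsto_rpow_neg_atTop (show 0 < α / 2 by positivity)).eventually_lt_const
      (show (0 : ℝ) < 1 / 16 by norm_num)
    have h2 := (tendsto_rpow_neg_atTop (show 0 < 1 - α / 2 by linarith)).eventually_lt_const
      (show (0 : ℝ) < 1 / 16 by norm_num)
    obtain ⟨K, h⟩ := ((eventually_ge_atTop 1).and (h1.and h2)).exists
    exact ⟨K, h⟩
  have hK0 : 0 < K := by linarith
  refine ⟨1 / 4, K, by norm_num, hK1, fun R hR => ?_⟩
  have hR0 : 0 < R := by linarith
  have i1 := hσ.integrable_one_sub_exp (show 0 ≤ R⁻¹ by positivity)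
  have i2 := (hσ.integrable_one_sub_exp (show 0 ≤ R⁻¹ * K⁻¹ by positivity)).const_mul 2
  have i3 := (hσ.integrable_one_sub_exp (show 0 ≤ R⁻¹ * K by positivity)).const_mul (2 / K)
  have hmeas := hσ.2.1 1 one_pos
  have hind : Integrable (fun τ => (Icc K⁻¹ K).indicator (1 : ℝ → ℝ) (τ / R) * σ 1 τ)
      (volume.restrict (Ioi 0)) := by
    refine hσ.integrable.bdd_mul (c := 1) ?_ ?_
    · exact ((measurable_one.indicator measurableSet_Icc).comp
        (measurable_id.div_const R)).aestronglyMeasurable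
    · refine ae_of_all _ fun τ => ?_
      by_cases h : τ / R ∈ Icc K⁻¹ K <;> simp [h]
  have hle := setIntegral_mono_on ((i1.sub i2).sub i3) hind measurableSet_Ioi (fun τ hτ => by
    have hτ' : 0 < τ := hτ
    have h := mul_le_mul_of_nonneg_right
      (one_sub_exp_sub_le hK1 (show 0 < τ / R by positivity)) (hσ.1 1 one_pos τ hτ)
    refine le_trans (le_of_eq ?_) h
    simp only [Pi.sub_apply, div_eq_mul_inv, neg_mul, mul_assoc]
    ring)
  refine le_trans ?_ hle
  have e : ∫ τ in Ioi (0 : ℝ), (((fun τ => (1 - exp (-τ * R⁻¹)) * σ 1 τ) -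
      (fun τ => 2 * ((1 - exp (-τ * (R⁻¹ * K⁻¹))) * σ 1 τ))) -
      (fun τ => 2 / K * ((1 - exp (-τ * (R⁻¹ * K))) * σ 1 τ))) τ =
      (1 - exp (-R⁻¹ ^ (α / 2))) - 2 * (1 - exp (-(R⁻¹ * K⁻¹) ^ (α / 2))) -
        2 / K * (1 - exp (-(R⁻¹ * K) ^ (α / 2))) := by
    rw [integral_sub' (i1.sub i2) i3, integral_sub' i1 i2, integral_const_mul,
      integral_const_mul, hσ.integral_one_sub_exp hα (by positivity),
      hσ.integral_one_sub_exp hα (by positivity), hσ.integral_one_sub_exp hα (by positivity)]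
  rw [e, mul_rpow (by positivity) (by positivity), mul_rpow (by positivity) (by positivity),
    inv_rpow hR0.le, ← rpow_neg hR0.le, inv_rpow hK0.le, ← rpow_neg hK0.le]
  set u := R ^ (-(α / 2)) with hu
  have hu0 : 0 < u := by positivity
  have hu1 : u ≤ 1 := rpow_le_one_of_one_le_of_nonpos hR (by linarith)
  have h1 : u / 2 ≤ 1 - exp (-u) := by
    have : exp (-u) ≤ 1 / (u + 1) := by
      rw [exp_neg, ← one_div]
      exact one_div_le_one_div_of_le (by positivity) (add_one_le_exp _)
    have h' : 1 / (u + 1) ≤ 1 - u / 2 := by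
      rw [div_le_iff₀ (by positivity)]
      nlinarith
    linarith
  have h2 : 2 * (1 - exp (-(u * K ^ (-(α / 2))))) ≤ u / 8 := by
    have := add_one_le_exp (-(u * K ^ (-(α / 2))))
    nlinarith
  have h3 : 2 / K * (1 - exp (-(u * K ^ (α / 2)))) ≤ u / 8 := by
    have := add_one_le_exp (-(u * K ^ (α / 2)))
    calc _ ≤ 2 / K * (u * K ^ (α / 2)) := by gcongr; linarith
      _ = 2 * u * K ^ (-(1 - α / 2)) := by
        rw [show -(1 - α / 2) = α / 2 - 1 by ring, rpow_sub_one hK0.ne']; ring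
      _ ≤ _ := by nlinarith
  linarith

end IsStableSubordinatorDensity
theorem rpow_le_of_comparable {K x y : ℝ} (q : ℝ) (hK : 1 ≤ K) (hx : 0 < x) (hy : 0 < y)
    (hxy : x ≤ K * y) (hyx : y ≤ K * x) : x ^ q ≤ K ^ |q| * y ^ q := by
  have hK0 : 0 < K := by linarith
  rcases le_total 0 q with hq | hq
  · rw [abs_of_nonneg hq, ← mul_rpow hK0.le hy.le]
    exact rpow_le_rpow hx.le hxy hq
  · rw [abs_of_nonpos hq]
    have h : (K * x) ^ q ≤ y ^ q := rpow_le_rpow_of_nonpos hy hyx hq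
    calc x ^ q = K ^ (-q) * (K * x) ^ q := by
          rw [mul_rpow hK0.le hx.le, ← mul_assoc, ← rpow_add hK0]; simp
      _ ≤ _ := by gcongr

theorem rpow_neg_le_add_mul {τ R X : ℝ} (ζ : ℝ) (hτ : 0 < τ) (hR : 0 < R) (hX : 0 < X) :
    (2 * τ + X) ^ (-ζ) ≤ (2 * R + X) ^ (-ζ) * (1 + R ^ ζ * τ ^ (-ζ)) := by
  have hτX : 0 < 2 * τ + X := by positivity
  have hRX : 0 < 2 * R + X := by positivity
  have h1 : 0 < (2 * R + X) ^ (-ζ) := by positivity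
  have h2 : 0 < R ^ ζ * τ ^ (-ζ) := by positivity
  have hmono : ∀ {a b : ℝ}, 0 < a → 0 < b → (a ≤ b ∧ ζ ≤ 0 ∨ b ≤ a ∧ 0 ≤ ζ) →
      a ^ (-ζ) ≤ b ^ (-ζ) := by
    rintro a b ha hb (⟨h, hz⟩ | ⟨h, hz⟩)
    · exact rpow_le_rpow ha.le h (by linarith)
    · exact rpow_le_rpow_of_nonpos hb h (by linarith)
  have hsame : (R ≤ τ ∧ 0 ≤ ζ ∨ τ ≤ R ∧ ζ ≤ 0) →
      (2 * τ + X) ^ (-ζ) ≤ (2 * R + X) ^ (-ζ) * (1 + R ^ ζ * τ ^ (-ζ)) := by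
    intro h
    have : (2 * τ + X) ^ (-ζ) ≤ (2 * R + X) ^ (-ζ) := hmono hτX hRX (by
      rcases h with h | h
      · exact Or.inr ⟨by linarith [h.1], h.2⟩
      · exact Or.inl ⟨by linarith [h.1], h.2⟩)
    nlinarith [mul_pos h1 h2]
  have hcross : (R ≤ τ ∧ ζ ≤ 0 ∨ τ ≤ R ∧ 0 ≤ ζ) →
      (2 * τ + X) ^ (-ζ) ≤ (2 * R + X) ^ (-ζ) * (1 + R ^ ζ * τ ^ (-ζ)) := by
    intro h
    have h3 : (2 * τ + X) ^ (-ζ) ≤ ((2 * R + X) * (R⁻¹ * τ)) ^ (-ζ) :=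
      hmono hτX (by positivity) (by
        have e : (2 * R + X) * (R⁻¹ * τ) = 2 * τ + X * (τ / R) := by field_simp
        rw [e]
        rcases h with h | h
        · have : 1 ≤ τ / R := (one_le_div hR).2 h.1
          exact Or.inl ⟨by nlinarith, h.2⟩
        · have : τ / R ≤ 1 := (div_le_one hR).2 h.1
          exact Or.inr ⟨by nlinarith, h.2⟩)
    rw [mul_rpow hRX.le (by positivity), mul_rpow (by positivity) hτ.le, inv_rpow hR.le,
      ← rpow_neg hR.le, neg_neg] at h3
    linarith
  rcases le_total R τ with h | h <;> rcases le_total 0 ζ with hz | hz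
  · exact hsame (Or.inl ⟨h, hz⟩)
  · exact hcross (Or.inl ⟨h, hz⟩)
  · exact hcross (Or.inr ⟨h, hz⟩)
  · exact hsame (Or.inr ⟨h, hz⟩)

theorem heatProfile_le {ζ X A τ : ℝ} (hX : 0 < X) (hA : 0 ≤ A) (hτ : 0 < τ) :
    heatProfile ζ X A τ ≤ (2 * (1 + A) + X) ^ (-ζ) *
      (τ ^ (-(1 / 2 : ℝ)) * exp (-A / (4 * τ)) +
        (1 + A) ^ ζ * (τ ^ (-(1 / 2 + ζ)) * exp (-A / (4 * τ)))) := by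
  have h := rpow_neg_le_add_mul ζ hτ (show 0 < 1 + A by positivity) hX
  unfold heatProfile
  calc _ ≤ τ ^ (-(1 / 2 : ℝ)) * ((2 * (1 + A) + X) ^ (-ζ) *
        (1 + (1 + A) ^ ζ * τ ^ (-ζ))) * exp (-A / (4 * τ)) := by gcongr
    _ = _ := by rw [neg_add, rpow_add hτ]; ring

theorem le_heatProfile {ζ X A K τ : ℝ} (hX : 0 < X) (hA : 0 ≤ A) (hK : 1 ≤ K)
    (hτ : τ / (1 + A) ∈ Icc K⁻¹ K) :
    K ^ (-(1 / 2 : ℝ)) * K ^ (-|ζ|) * exp (-K / 4) *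
      ((1 + A) ^ (-(1 / 2 : ℝ)) * (2 * (1 + A) + X) ^ (-ζ)) ≤ heatProfile ζ X A τ := by
  have hK0 : 0 < K := by linarith
  have hR : 0 < 1 + A := by linarith
  obtain ⟨h1, h2⟩ := hτ
  rw [le_div_iff₀ hR] at h1
  rw [div_le_iff₀ hR] at h2
  have hτ0 : 0 < τ := lt_of_lt_of_le (by positivity) h1
  have h1' : 1 + A ≤ K * τ := by
    rwa [inv_mul_le_iff₀ hK0] at h1
  have e1 : K ^ (-(1 / 2 : ℝ)) * (1 + A) ^ (-(1 / 2 : ℝ)) ≤ τ ^ (-(1 / 2 : ℝ)) := by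
    rw [← mul_rpow hK0.le hR.le]
    exact rpow_le_rpow_of_nonpos hτ0 h2 (by norm_num)
  have e2 : K ^ (-|ζ|) * (2 * (1 + A) + X) ^ (-ζ) ≤ (2 * τ + X) ^ (-ζ) := by
    have h := rpow_le_of_comparable (-ζ) hK (show 0 < 2 * (1 + A) + X by positivity)
      (show 0 < 2 * τ + X by positivity) (by nlinarith) (by nlinarith)
    rw [abs_neg] at h
    rw [rpow_neg hK0.le, inv_mul_le_iff₀ (by positivity)]
    exact h
  have e3 : exp (-K / 4) ≤ exp (-A / (4 * τ)) := by
    refine exp_le_exp.2 ?_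
    rw [neg_div, neg_div, neg_le_neg_iff, div_le_div_iff₀ (by positivity) (by norm_num)]
    nlinarith
  unfold heatProfile
  calc _ = (K ^ (-(1 / 2 : ℝ)) * (1 + A) ^ (-(1 / 2 : ℝ))) *
        (K ^ (-|ζ|) * (2 * (1 + A) + X) ^ (-ζ)) * exp (-K / 4) := by ring
    _ ≤ _ := by gcongr

theorem heatProfile_nonneg {ζ X A τ : ℝ} (hX : 0 < X) (hτ : 0 < τ) :
    0 ≤ heatProfile ζ X A τ := by
  unfold heatProfile
  positivity

theorem exists_subKernel_bounds {ζ α : ℝ} (hζ : -1 / 2 < ζ) (hα : 0 < α) (hα2 : α < 2)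
    {σ : ℝ → ℝ → ℝ} (hσ : IsStableSubordinatorDensity α σ) :
    ∃ c C : ℝ, 0 < c ∧ 0 < C ∧ ∀ r s : ℝ, 0 < r → 0 < s →
      c * ((1 + (r - s) ^ 2) ^ (-(1 / 2) - α / 2) *
          (2 * (1 + (r - s) ^ 2) + r * s) ^ (-ζ)) ≤ subKernel ζ σ 1 r s ∧
      subKernel ζ σ 1 r s ≤ C * ((1 + (r - s) ^ 2) ^ (-(1 / 2) - α / 2) *
          (2 * (1 + (r - s) ^ 2) + r * s) ^ (-ζ)) := by
  obtain ⟨b, B, hb, hB, hbd⟩ := exists_besselHeat_bounds hζ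
  obtain ⟨C1, hC1, H1⟩ := hσ.exists_integral_rpow_neg_mul_exp_le hα (p := 1 / 2) (by norm_num)
  obtain ⟨C2, hC2, H2⟩ := hσ.exists_integral_rpow_neg_mul_exp_le hα (p := 1 / 2 + ζ)
    (by linarith)
  obtain ⟨c, K, hc, hK, H3⟩ := hσ.exists_le_integral_Icc hα hα2
  have hK0 : 0 < K := by linarith
  refine ⟨b * (K ^ (-(1 / 2 : ℝ)) * K ^ (-|ζ|) * exp (-K / 4)) * c, B * (C1 + C2),
    by positivity, by positivity, fun r s hr hs => ?_⟩
  have hX : 0 < r * s := mul_pos hr hs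
  set X := r * s with hXdef
  set A := (r - s) ^ 2 with hAdef
  have hA : 0 ≤ A := sq_nonneg _
  have hR : 0 < 1 + A := by linarith
  have i1 := hσ.integrable_rpow_neg_mul_exp hα (p := 1 / 2) (by norm_num) hA
  have i2 := hσ.integrable_rpow_neg_mul_exp hα (p := 1 / 2 + ζ) (by linarith) hA
  have iU := (i1.add (i2.const_mul ((1 + A) ^ ζ))).const_mul (B * (2 * (1 + A) + X) ^ (-ζ))
  have hle : ∀ τ ∈ Ioi (0 : ℝ), besselHeat ζ τ r s * σ 1 τ ≤
      B * (2 * (1 + A) + X) ^ (-ζ) * (τ ^ (-(1 / 2 : ℝ)) * exp (-A / (4 * τ)) * σ 1 τ +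
        (1 + A) ^ ζ * (τ ^ (-(1 / 2 + ζ)) * exp (-A / (4 * τ)) * σ 1 τ)) := by
    intro τ hτ
    have h := mul_le_mul_of_nonneg_right ((hbd τ r s hτ hr hs).2.trans
      (mul_le_mul_of_nonneg_left (heatProfile_le hX hA hτ) hB.le)) (hσ.1 1 one_pos τ hτ)
    exact h.trans (le_of_eq (by ring))
  have hge : ∀ τ ∈ Ioi (0 : ℝ), b * heatProfile ζ X A τ * σ 1 τ ≤
      besselHeat ζ τ r s * σ 1 τ := fun τ hτ =>
    mul_le_mul_of_nonneg_right (hbd τ r s hτ hr hs).1 (hσ.1 1 one_pos τ hτ)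
  have hint : Integrable (fun τ => besselHeat ζ τ r s * σ 1 τ) (volume.restrict (Ioi 0)) := by
    refine iU.mono' ((aestronglyMeasurable_besselHeat hζ hr hs).mul
      (hσ.2.1 1 one_pos).aestronglyMeasurable) ?_
    filter_upwards [ae_restrict_mem measurableSet_Ioi] with τ hτ
    rw [norm_of_nonneg]
    · exact hle τ hτ
    · exact (mul_nonneg (mul_nonneg hb.le (heatProfile_nonneg hX hτ))
        (hσ.1 1 one_pos τ hτ)).trans (hge τ hτ)
  constructor
  · set D := b * (K ^ (-(1 / 2 : ℝ)) * K ^ (-|ζ|) * exp (-K / 4)) *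
      ((1 + A) ^ (-(1 / 2 : ℝ)) * (2 * (1 + A) + X) ^ (-ζ)) with hD
    have hD0 : 0 ≤ D := by positivity
    have hlow : ∫ τ in Ioi (0 : ℝ), D * ((Icc K⁻¹ K).indicator 1 (τ / (1 + A)) * σ 1 τ) ≤
        subKernel ζ σ 1 r s := by
      refine integral_mono_of_nonneg ?_ hint ?_
      · filter_upwards [ae_restrict_mem measurableSet_Ioi] with τ hτ
        exact mul_nonneg hD0 (mul_nonneg (indicator_nonneg (fun _ _ => zero_le_one) _)
          (hσ.1 1 one_pos τ hτ))
      · filter_upwards [ae_restrict_mem measurableSet_Ioi] with τ hτ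
        refine le_trans ?_ (hge τ hτ)
        rw [← mul_assoc]
        refine mul_le_mul_of_nonneg_right ?_ (hσ.1 1 one_pos τ hτ)
        by_cases h : τ / (1 + A) ∈ Icc K⁻¹ K
        · rw [indicator_of_mem h, Pi.one_apply, mul_one, hD, mul_assoc]
          exact mul_le_mul_of_nonneg_left (le_heatProfile hX hA hK h) hb.le
        · rw [indicator_of_notMem h, mul_zero]
          exact mul_nonneg hb.le (heatProfile_nonneg hX hτ)
    refine le_trans ?_ hlow
    rw [integral_const_mul]
    refine le_trans (le_of_eq ?_) (mul_le_mul_of_nonneg_left (H3 (1 + A) (by linarith)) hD0)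
    rw [hD, sub_eq_add_neg, rpow_add hR]
    ring
  · refine (setIntegral_mono_on hint iU measurableSet_Ioi hle).trans ?_
    have h1 := H1 A hA
    have h2 := H2 A hA
    simp only [Pi.add_apply]
    rw [integral_const_mul, integral_add i1 (i2.const_mul _), integral_const_mul]
    calc _ ≤ B * (2 * (1 + A) + X) ^ (-ζ) * (C1 * (1 + A) ^ (-(1 / 2) - α / 2) +
          (1 + A) ^ ζ * (C2 * (1 + A) ^ (-(1 / 2 + ζ) - α / 2))) := by gcongr
      _ = _ := by
        have : (1 + A) ^ (-(1 / 2) - α / 2) = (1 + A) ^ ζ * (1 + A) ^ (-(1 / 2 + ζ) - α / 2) := by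
          rw [← rpow_add hR]; congr 1; ring
        rw [this]; ring

theorem denominator_le {ζ α r s : ℝ} (hζ : -1 / 2 < ζ) (hα : 0 < α) (hr : 0 < r)
    (hs : 0 < s) :
    |r - s| ^ (1 + α) * (r + s) ^ (2 * ζ) + (1 + r + s) ^ (2 * ζ) ≤
      2 * ((1 + |r - s|) ^ (1 + α) * (1 + r + s) ^ (2 * ζ)) := by
  set a := |r - s| with ha
  set S := r + s with hS
  have ha0 : 0 ≤ a := abs_nonneg _
  have hS0 : 0 < S := by positivity
  have haS : a ≤ S := abs_le.2 ⟨by linarith, by linarith⟩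
  rw [add_assoc 1 r s, ← hS]
  have h1 : (1 : ℝ) ≤ (1 + a) ^ (1 + α) := one_le_rpow (by linarith) (by linarith)
  have hp : 0 < (1 + S) ^ (2 * ζ) := by positivity
  have h2 : a ^ (1 + α) * S ^ (2 * ζ) ≤ (1 + a) ^ (1 + α) * (1 + S) ^ (2 * ζ) := by
    rcases ha0.eq_or_lt with h0 | h0
    · rw [← h0, zero_rpow (by linarith), zero_mul]
      positivity
    have hq : S ^ (2 * ζ) ≤ (1 + S) / S * (1 + S) ^ (2 * ζ) := by
      have h3 : ((1 + S) / S) ^ (-(2 * ζ)) ≤ ((1 + S) / S) ^ (1 : ℝ) :=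
        rpow_le_rpow_of_exponent_le ((one_le_div hS0).2 (by linarith)) (by linarith)
      rw [rpow_one, div_rpow (by positivity) hS0.le, rpow_neg hS0.le, rpow_neg (by positivity),
        div_inv_eq_mul, inv_mul_le_iff₀ hp] at h3
      linarith
    have h4 : a * ((1 + S) / S) ≤ 1 + a := by
      rw [← mul_div_assoc, div_le_iff₀ hS0]
      nlinarith
    have h5 : a ^ α ≤ (1 + a) ^ α := rpow_le_rpow ha0 (by linarith) hα.le
    rw [rpow_one_add' ha0 (by linarith), rpow_one_add' (by positivity) (by linarith)]
    calc _ ≤ a * a ^ α * ((1 + S) / S * (1 + S) ^ (2 * ζ)) := by gcongr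
      _ = (a * ((1 + S) / S)) * a ^ α * (1 + S) ^ (2 * ζ) := by ring
      _ ≤ _ := by gcongr
  nlinarith

theorem le_denominator {ζ α r s : ℝ} (hα : 0 < α) (hr : 0 < r) (hs : 0 < s) :
    (1 + |r - s|) ^ (1 + α) * (1 + r + s) ^ (2 * ζ) ≤
      2 ^ (1 + α) * 2 ^ |2 * ζ| *
        (|r - s| ^ (1 + α) * (r + s) ^ (2 * ζ) + (1 + r + s) ^ (2 * ζ)) := by
  set a := |r - s| with ha
  set S := r + s with hS
  have ha0 : 0 ≤ a := abs_nonneg _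
  have hS0 : 0 < S := by positivity
  have haS : a ≤ S := abs_le.2 ⟨by linarith, by linarith⟩
  rw [add_assoc 1 r s, ← hS]
  have h2 : (1 : ℝ) ≤ 2 ^ |2 * ζ| := one_le_rpow (by norm_num) (abs_nonneg _)
  have hp : 0 < (1 + S) ^ (2 * ζ) := by positivity
  have hq : 0 ≤ a ^ (1 + α) * S ^ (2 * ζ) := by positivity
  rcases le_total a 1 with h1 | h1
  · calc _ ≤ 2 ^ (1 + α) * (1 + S) ^ (2 * ζ) := by gcongr; linarith
      _ = 2 ^ (1 + α) * 1 * (0 + (1 + S) ^ (2 * ζ)) := by ring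
      _ ≤ _ := by gcongr
  · have h3 := rpow_le_of_comparable (2 * ζ) one_le_two (show 0 < 1 + S by positivity) hS0
      (by linarith) (by linarith)
    calc _ ≤ (2 * a) ^ (1 + α) * (2 ^ |2 * ζ| * S ^ (2 * ζ)) := by gcongr; linarith
      _ = 2 ^ (1 + α) * 2 ^ |2 * ζ| * (a ^ (1 + α) * S ^ (2 * ζ) + 0) := by
        rw [mul_rpow (by norm_num) ha0]; ring
      _ ≤ _ := by gcongr

theorem exists_profile_bounds (ζ α : ℝ) : ∃ M : ℝ, 0 < M ∧ ∀ r s : ℝ, 0 < r → 0 < s →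
    (1 + (r - s) ^ 2) ^ (-(1 / 2) - α / 2) * (2 * (1 + (r - s) ^ 2) + r * s) ^ (-ζ) ≤
      M * ((1 + |r - s|) ^ (1 + α) * (1 + r + s) ^ (2 * ζ))⁻¹ ∧
    ((1 + |r - s|) ^ (1 + α) * (1 + r + s) ^ (2 * ζ))⁻¹ ≤
      M * ((1 + (r - s) ^ 2) ^ (-(1 / 2) - α / 2) *
        (2 * (1 + (r - s) ^ 2) + r * s) ^ (-ζ)) := by
  refine ⟨8 ^ |-(1 / 2) - α / 2| * 8 ^ |-ζ|, by positivity, fun r s hr hs => ?_⟩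
  have hX : 0 < r * s := mul_pos hr hs
  have ha0 : 0 ≤ |r - s| := abs_nonneg _
  have e : ((1 + |r - s|) ^ (1 + α) * (1 + r + s) ^ (2 * ζ))⁻¹ =
      ((1 + |r - s|) ^ 2) ^ (-(1 / 2) - α / 2) * ((1 + r + s) ^ 2) ^ (-ζ) := by
    rw [mul_inv, ← rpow_neg (by positivity), ← rpow_neg (by positivity),
      ← rpow_natCast_mul (by positivity), ← rpow_natCast_mul (by positivity)]
    congr 2 <;> push_cast <;> ring
  have hsq : (r - s) ^ 2 = |r - s| ^ 2 := (sq_abs _).symm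
  have b1 : 1 + (r - s) ^ 2 ≤ 8 * (1 + |r - s|) ^ 2 := by rw [hsq]; nlinarith
  have b2 : (1 + |r - s|) ^ 2 ≤ 8 * (1 + (r - s) ^ 2) := by
    rw [hsq]; nlinarith [sq_nonneg (|r - s| - 1)]
  have b3 : 2 * (1 + (r - s) ^ 2) + r * s ≤ 8 * (1 + r + s) ^ 2 := by nlinarith
  have b4 : (1 + r + s) ^ 2 ≤ 8 * (2 * (1 + (r - s) ^ 2) + r * s) := by
    nlinarith [sq_nonneg (r + s - 1), sq_nonneg (r - s)]
  have p1 : 0 < 1 + (r - s) ^ 2 := by positivity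
  have p2 : 0 < 2 * (1 + (r - s) ^ 2) + r * s := by positivity
  have p3 : 0 < (1 + |r - s|) ^ 2 := by positivity
  have p4 : 0 < (1 + r + s) ^ 2 := by positivity
  have one8 : (1 : ℝ) ≤ 8 := by norm_num
  rw [e]
  constructor
  · refine (mul_le_mul (rpow_le_of_comparable _ one8 p1 p3 b1 b2)
      (rpow_le_of_comparable _ one8 p2 p4 b3 b4) (by positivity) (by positivity)).trans
      (le_of_eq (by ring))
  · refine (mul_le_mul (rpow_le_of_comparable _ one8 p3 p1 b2 b1)
      (rpow_le_of_comparable _ one8 p4 p2 b4 b3) (by positivity) (by positivity)).trans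
      (le_of_eq (by ring))

theorem stmt3 (ζ α : ℝ) (hζ : -1/2 < ζ) (hα0 : 0 < α) (hα2 : α < 2)
    (σ : ℝ → ℝ → ℝ) (hσ : IsStableSubordinatorDensity α σ) :
    ∃ c C : ℝ, 0 < c ∧ 0 < C ∧
      ∀ r s : ℝ, 0 < r → 0 < s →
        c / (|r - s| ^ (1 + α) * (r + s) ^ (2 * ζ) + (1 + r + s) ^ (2 * ζ))
            ≤ subKernel ζ σ 1 r s ∧
          subKernel ζ σ 1 r s
            ≤ C / (|r - s| ^ (1 + α) * (r + s) ^ (2 * ζ) + (1 + r + s) ^ (2 * ζ)) := by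
  obtain ⟨k, K, hk, hK, H⟩ := exists_subKernel_bounds hζ hα0 hα2 hσ
  obtain ⟨M, hM, HM⟩ := exists_profile_bounds ζ α
  set N : ℝ := 2 ^ (1 + α) * 2 ^ |2 * ζ| with hN
  have hN0 : 0 < N := by positivity
  refine ⟨k / (M * N), K * M * 2, by positivity, by positivity, fun r s hr hs => ?_⟩
  obtain ⟨h1, h2⟩ := H r s hr hs
  obtain ⟨h3, h4⟩ := HM r s hr hs
  have h5 := denominator_le hζ hα0 hr hs
  have h6 := le_denominator (ζ := ζ) hα0 hr hs
  rw [← hN] at h6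
  set P := (1 + (r - s) ^ 2) ^ (-(1 / 2) - α / 2) * (2 * (1 + (r - s) ^ 2) + r * s) ^ (-ζ)
  set E := (1 + |r - s|) ^ (1 + α) * (1 + r + s) ^ (2 * ζ)
  set D := |r - s| ^ (1 + α) * (r + s) ^ (2 * ζ) + (1 + r + s) ^ (2 * ζ)
  have hE : 0 < E := by positivity
  have hD : 0 < D := by positivity
  constructor
  · refine le_trans ?_ h1
    have h7 : D⁻¹ ≤ N * E⁻¹ := by
      rw [inv_le_iff_one_le_mul₀ hD, mul_assoc, inv_mul_eq_div, ← mul_div_assoc,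
        one_le_div hE]
      exact h6
    calc k / (M * N) / D = k / (M * N) * D⁻¹ := by rw [div_eq_mul_inv _ D]
      _ ≤ k / (M * N) * (N * (M * P)) := by
        gcongr
        exact h7.trans (mul_le_mul_of_nonneg_left h4 hN0.le)
      _ = k * P := by field_simp
  · refine h2.trans ?_
    have h7 : E⁻¹ ≤ 2 * D⁻¹ := by
      rw [← div_eq_mul_inv, le_div_iff₀ hD, inv_mul_le_iff₀ hE]
      linarith
    calc K * P ≤ K * (M * (2 * D⁻¹)) := by
          gcongr
          exact h3.trans (mul_le_mul_of_nonneg_left h7 hM.le)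
      _ = _ := by rw [div_eq_mul_inv]; ring
end

section
/- For all r, s, t > 0 one has the explicit identity p_1^{(1)}(t,r,s) = (4/π) · t / ((r²-s²)² + t²(t² + 2r² + 2s²)). -/
open MeasureTheory Real Set Filter

/-- The `1/2`-stable (Lévy) subordinator density. -/
noncomputable def levyDensity (t τ : ℝ) : ℝ :=
  1 / (2 * Real.sqrt π) * t / τ ^ ((3 : ℝ) / 2) * Real.exp (-t ^ 2 / (4 * τ))

/-- The `1/2`-subordinated Bessel heat kernel `p_ζ^{(1)}(t,r,s)`. -/
noncomputable def subKernel1 (ζ t r s : ℝ) : ℝ :=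
  ∫ τ in Ioi (0 : ℝ), besselHeat ζ τ r s * levyDensity t τ

/-- The modified Bessel function of order `1/2` is elementary. -/
theorem besselI_half {x : ℝ} (hx : 0 < x) :
    besselI (1 / 2) x = 2 * √(x / 2) / (√π * x) * Real.sinh x := by
  unfold besselI
  rw [← ((Real.hasSum_sinh x).mul_left _).tsum_eq]
  refine tsum_congr fun k => ?_
  have hpow : (x / 2) ^ (2 * (k : ℝ) + 1 / 2) = (x / 2) ^ (2 * k) * √(x / 2) := by
    rw [Real.rpow_add (by positivity), ← Real.sqrt_eq_rpow]
    congr 1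
    exact_mod_cast Real.rpow_natCast (x / 2) (2 * k)
  have hGamma : Real.Gamma ((k : ℝ) + 1 / 2 + 1) =
      (Nat.doubleFactorial (2 * k + 1) : ℝ) * √π / 2 ^ (k + 1) := by
    rw [← Real.Gamma_nat_add_one_add_half]
    congr 1
    ring
  have hfact : (Nat.factorial (2 * k + 1) : ℝ) =
      (Nat.doubleFactorial (2 * k + 1) : ℝ) * (2 ^ k * Nat.factorial k) := by
    rw [Nat.factorial_eq_mul_doubleFactorial, Nat.doubleFactorial_two_mul]
    push_cast
    ring
  have h1 : (Nat.doubleFactorial (2 * k + 1) : ℝ) ≠ 0 := by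
    exact_mod_cast (Nat.doubleFactorial_pos _).ne'
  have h2 : (Nat.factorial k : ℝ) ≠ 0 := by positivity
  have h3 : √π ≠ 0 := by positivity
  have h4 : (2 : ℝ) ^ (2 * k) = 2 ^ k * 2 ^ k := by rw [two_mul, pow_add]
  rw [hpow, hGamma, hfact, div_pow, h4]
  field_simp
  ring

/-- The Bessel heat kernel with `ζ = 1` is a difference of two Gaussians. -/
theorem besselHeat_one {τ r s : ℝ} (hτ : 0 < τ) (hr : 0 < r) (hs : 0 < s) :
    besselHeat 1 τ r s = 1 / (2 * (r * s) * √(π * τ)) *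
      (Real.exp (-(r - s) ^ 2 / (4 * τ)) - Real.exp (-(r + s) ^ 2 / (4 * τ))) := by
  have hrs : 0 < r * s := mul_pos hr hs
  have e1 : -(r - s) ^ 2 / (4 * τ) = -(r ^ 2 + s ^ 2) / (4 * τ) + r * s / (2 * τ) := by
    field_simp
    ring
  have e2 : -(r + s) ^ 2 / (4 * τ) = -(r ^ 2 + s ^ 2) / (4 * τ) + -(r * s / (2 * τ)) := by
    field_simp
    ring
  have hpow : (r * s) ^ ((1 : ℝ) / 2 - 1) = 1 / √(r * s) := by
    rw [show (1 : ℝ) / 2 - 1 = -(1 / 2) by norm_num, Real.rpow_neg hrs.le, ← Real.sqrt_eq_rpow,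
      one_div]
  have hsqrt : √(r * s / (2 * τ) / 2) = √(r * s) / (2 * √τ) := by
    rw [show r * s / (2 * τ) / 2 = r * s / (2 ^ 2 * τ) by field_simp,
      Real.sqrt_div hrs.le, Real.sqrt_mul (by norm_num : (0 : ℝ) ≤ 2 ^ 2),
      Real.sqrt_sq zero_le_two]
  unfold besselHeat
  rw [show (1 : ℝ) - 1 / 2 = 1 / 2 by norm_num, besselI_half (by positivity), hpow, hsqrt,
    Real.sinh_eq, e1, e2, Real.exp_add, Real.exp_add, Real.sqrt_mul Real.pi_pos.le]
  have h1 : √(r * s) ≠ 0 := by positivity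
  have h2 : √τ ≠ 0 := by positivity
  have h3 : √π ≠ 0 := by positivity
  field_simp

theorem rpow_neg_two_mul_exp_eq {a x : ℝ} (hx : 0 < x) :
    |(-1 : ℝ)| * x ^ ((-1 : ℝ) - 1) * Real.exp (-a * x ^ (-1 : ℝ)) =
      1 / x ^ 2 * Real.exp (-a / x) := by
  rw [show (-1 : ℝ) - 1 = -(2 : ℕ) by norm_num, Real.rpow_neg hx.le, Real.rpow_natCast,
    Real.rpow_neg_one]
  simp [div_eq_mul_inv]

theorem integrableOn_inv_sq_mul_exp_neg_div {a : ℝ} (ha : 0 < a) :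
    IntegrableOn (fun x : ℝ => 1 / x ^ 2 * Real.exp (-a / x)) (Ioi 0) := by
  have h := (integrableOn_Ioi_comp_rpow_iff (fun x : ℝ => Real.exp (-a * x))
    (p := -1) (by norm_num)).2 (integrableOn_exp_mul_Ioi (neg_lt_zero.2 ha) 0)
  refine h.congr_fun (fun x hx => ?_) measurableSet_Ioi
  simpa only [smul_eq_mul] using rpow_neg_two_mul_exp_eq hx

theorem integral_inv_sq_mul_exp_neg_div {a : ℝ} (ha : 0 < a) :
    ∫ x in Ioi (0 : ℝ), 1 / x ^ 2 * Real.exp (-a / x) = 1 / a := by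
  have h := integral_comp_rpow_Ioi (fun x : ℝ => Real.exp (-a * x)) (p := -1) (by norm_num)
  rw [integral_exp_mul_Ioi (neg_lt_zero.2 ha) 0] at h
  rw [← setIntegral_congr_fun measurableSet_Ioi fun x hx => rpow_neg_two_mul_exp_eq (a := a) hx]
  simpa [neg_div_neg_eq] using h

theorem besselHeat_one_mul_levyDensity {τ r s t : ℝ} (hτ : 0 < τ) (hr : 0 < r) (hs : 0 < s) :
    besselHeat 1 τ r s * levyDensity t τ = t / (4 * π * (r * s)) *
      (1 / τ ^ 2 * Real.exp (-(((r - s) ^ 2 + t ^ 2) / 4) / τ) -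
        1 / τ ^ 2 * Real.exp (-(((r + s) ^ 2 + t ^ 2) / 4) / τ)) := by
  have e (u : ℝ) : -((u ^ 2 + t ^ 2) / 4) / τ = -u ^ 2 / (4 * τ) + -t ^ 2 / (4 * τ) := by
    field_simp
    ring
  have hpow : τ ^ ((3 : ℝ) / 2) = τ * √τ := by
    rw [show (3 : ℝ) / 2 = 1 + 1 / 2 by norm_num, Real.rpow_add hτ, Real.rpow_one,
      ← Real.sqrt_eq_rpow]
  have hcoef : 1 / (2 * (r * s) * √(π * τ)) * (1 / (2 * √π) * t / (τ * √τ)) =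
      t / (4 * π * (r * s)) * (1 / τ ^ 2) := by
    have hπ : √π ^ 2 = π := Real.sq_sqrt Real.pi_pos.le
    have hτ' : √τ ^ 2 = τ := Real.sq_sqrt hτ.le
    rw [Real.sqrt_mul Real.pi_pos.le]
    calc _ = t / (4 * √π ^ 2 * (r * s)) * (1 / (τ * √τ ^ 2)) := by
          field_simp
          ring
      _ = _ := by rw [hπ, hτ', ← sq]
  rw [besselHeat_one hτ hr hs, levyDensity, e, e, Real.exp_add, Real.exp_add, hpow]
  linear_combination (Real.exp (-(r - s) ^ 2 / (4 * τ)) - Real.exp (-(r + s) ^ 2 / (4 * τ))) *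
    Real.exp (-t ^ 2 / (4 * τ)) * hcoef

theorem stmt5 :
    ∀ r s t : ℝ, 0 < r → 0 < s → 0 < t →
      subKernel1 1 t r s
        = 4 / π * t / ((r ^ 2 - s ^ 2) ^ 2 + t ^ 2 * (t ^ 2 + 2 * r ^ 2 + 2 * s ^ 2)) := by
  intro r s t hr hs ht
  have hA : 0 < ((r - s) ^ 2 + t ^ 2) / 4 := by positivity
  have hB : 0 < ((r + s) ^ 2 + t ^ 2) / 4 := by positivity
  have hfactor : (r ^ 2 - s ^ 2) ^ 2 + t ^ 2 * (t ^ 2 + 2 * r ^ 2 + 2 * s ^ 2) =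
      ((r - s) ^ 2 + t ^ 2) * ((r + s) ^ 2 + t ^ 2) := by ring
  unfold subKernel1
  rw [setIntegral_congr_fun measurableSet_Ioi fun τ hτ =>
      besselHeat_one_mul_levyDensity (t := t) hτ hr hs,
    integral_const_mul, integral_sub (integrableOn_inv_sq_mul_exp_neg_div hA)
      (integrableOn_inv_sq_mul_exp_neg_div hB), integral_inv_sq_mul_exp_neg_div hA,
    integral_inv_sq_mul_exp_neg_div hB, hfactor]
  have hA' : (r - s) ^ 2 + t ^ 2 ≠ 0 := by positivity
  have hB' : (r + s) ^ 2 + t ^ 2 ≠ 0 := by positivity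
  field_simp
  ring
end

section
/- Let ζ ∈ (-1/2, ∞). Then there exist constants c, C > 0 (depending only on ζ) such that for all r, s, t > 0: c · t / ((r²+s²+t²)^ζ · ((r-s)² + t²)) ≤ p_ζ^{(1)}(t,r,s) ≤ C · t / ((r²+s²+t²)^ζ · ((r-s)² + t²)). -/
open MeasureTheory Real Set Filter

theorem Gamma_add_mul_GammaSeq {s : ℝ} (hs : 0 < s) (n : ℕ) :
    Gamma (s + (n + 1 : ℕ)) * GammaSeq s n = Gamma s * ((n : ℝ) ^ s * n.factorial) := by
  have key : ∀ m : ℕ, Gamma (s + m) = Gamma s * ∏ j ∈ Finset.range m, (s + j) := by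
    intro m
    induction m with
    | zero => simp
    | succ m ih =>
      have h : s + m ≠ 0 := by positivity
      rw [Finset.prod_range_succ, Nat.cast_succ, ← add_assoc, Gamma_add_one h, ih]
      ring
  have hp : ∏ j ∈ Finset.range (n + 1), (s + (j : ℝ)) ≠ 0 :=
    Finset.prod_ne_zero_iff.mpr fun j _ => by positivity
  rw [key, GammaSeq]
  field_simp

theorem tendsto_Gamma_mul_Gamma_div {a b c e : ℝ} (ha : 0 < a) (hb : 0 < b) (hc : 0 < c)
    (he : 0 < e) (h : a + b = c + e) :
    Tendsto (fun k : ℕ => Gamma (a + k) * Gamma (b + k) / (Gamma (c + k) * Gamma (e + k)))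
      atTop (nhds 1) := by
  rw [← tendsto_add_atTop_iff_nat 1]
  have gpos : ∀ {x : ℝ}, 0 < x → Gamma x ≠ 0 := fun hx => (Gamma_pos_of_pos hx).ne'
  have lim : Tendsto (fun n : ℕ => Gamma a * Gamma b / (Gamma c * Gamma e) *
      (GammaSeq c n * GammaSeq e n / (GammaSeq a n * GammaSeq b n))) atTop (nhds 1) := by
    have := (((GammaSeq_tendsto_Gamma c).mul (GammaSeq_tendsto_Gamma e)).div
      ((GammaSeq_tendsto_Gamma a).mul (GammaSeq_tendsto_Gamma b))
      (mul_ne_zero (gpos ha) (gpos hb))).const_mul (Gamma a * Gamma b / (Gamma c * Gamma e))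
    rwa [div_mul_div_cancel₀ (mul_ne_zero (gpos hc) (gpos he)),
      div_self (mul_ne_zero (gpos ha) (gpos hb))] at this
  refine lim.congr' ?_
  filter_upwards [eventually_gt_atTop 0] with n hn
  have hn' : (0 : ℝ) < n := by exact_mod_cast hn
  have seqEq : ∀ {s : ℝ}, 0 < s →
      GammaSeq s n = Gamma s * ((n : ℝ) ^ s * n.factorial) / Gamma (s + (n + 1 : ℕ)) := by
    intro s hs
    rw [eq_div_iff (gpos (by positivity)), mul_comm, Gamma_add_mul_GammaSeq hs]
  have hpow : (n : ℝ) ^ a * (n : ℝ) ^ b = (n : ℝ) ^ c * (n : ℝ) ^ e := by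
    rw [← rpow_add hn', ← rpow_add hn', h]
  have ga : Gamma (a + (n + 1 : ℕ)) ≠ 0 := gpos (by positivity)
  have gb : Gamma (b + (n + 1 : ℕ)) ≠ 0 := gpos (by positivity)
  have gc : Gamma (c + (n + 1 : ℕ)) ≠ 0 := gpos (by positivity)
  have ge : Gamma (e + (n + 1 : ℕ)) ≠ 0 := gpos (by positivity)
  have := gpos ha
  have := gpos hb
  have := gpos hc
  have := gpos he
  have pa : (n : ℝ) ^ a ≠ 0 := (rpow_pos_of_pos hn' a).ne'
  have pb : (n : ℝ) ^ b ≠ 0 := (rpow_pos_of_pos hn' b).ne'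
  have hf : (n.factorial : ℝ) ≠ 0 := by positivity
  rw [seqEq ha, seqEq hb, seqEq hc, seqEq he]
  generalize Gamma (a + (n + 1 : ℕ)) = Ga at *
  generalize Gamma (b + (n + 1 : ℕ)) = Gb at *
  generalize Gamma (c + (n + 1 : ℕ)) = Gc at *
  generalize Gamma (e + (n + 1 : ℕ)) = Ge at *
  generalize (n : ℝ) ^ a = pa at *
  generalize (n : ℝ) ^ b = pb at *
  generalize (n : ℝ) ^ c = pc at *
  generalize (n : ℝ) ^ e = pe at *
  generalize (n.factorial : ℝ) = f at *
  field_simp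
  linear_combination -hpow

/-- The coefficients of the expansion of the subordinated kernel in powers of
`(2rs / (r² + s² + t²))²`. -/
noncomputable def subCoeff (ζ : ℝ) (k : ℕ) : ℝ :=
  Gamma (2 * k + ζ + 1) / (4 ^ k * (k.factorial * Gamma (k + (ζ - 1 / 2) + 1)))

theorem subCoeff_pos {ζ : ℝ} (hζ : -1 / 2 < ζ) (k : ℕ) : 0 < subCoeff ζ k := by
  have hk : (0 : ℝ) ≤ k := k.cast_nonneg
  have h1 : 0 < Gamma (2 * k + ζ + 1) := Gamma_pos_of_pos (by linarith)
  have h2 : 0 < Gamma (k + (ζ - 1 / 2) + 1) := Gamma_pos_of_pos (by linarith)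
  unfold subCoeff
  positivity

theorem tendsto_subCoeff {ζ : ℝ} (hζ : -1 / 2 < ζ) :
    Tendsto (subCoeff ζ) atTop (nhds (2 ^ ζ / √π)) := by
  have lim := (tendsto_Gamma_mul_Gamma_div (a := (ζ + 1) / 2) (b := (ζ + 2) / 2) (c := 1)
    (e := ζ + 1 / 2) (by linarith) (by linarith) one_pos (by linarith) (by ring)).const_mul
      (2 ^ ζ / √π)
  rw [mul_one] at lim
  refine lim.congr fun k => ?_
  have hk : (0 : ℝ) ≤ k := k.cast_nonneg
  have h2 : Gamma (ζ + 1 / 2 + k) ≠ 0 := (Gamma_pos_of_pos (by linarith)).ne'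
  have hπ : √π ≠ 0 := by positivity
  have dup := Gamma_mul_Gamma_add_half ((ζ + 1) / 2 + k)
  rw [show (ζ + 1) / 2 + k + 1 / 2 = (ζ + 2) / 2 + k by ring,
    show 2 * ((ζ + 1) / 2 + (k : ℝ)) = 2 * k + ζ + 1 by ring,
    show 1 - (2 * (k : ℝ) + ζ + 1) = -ζ - 2 * k by ring, rpow_sub two_pos, rpow_neg zero_le_two,
    rpow_mul zero_le_two, rpow_natCast] at dup
  norm_num at dup
  have hp : (2 : ℝ) ^ ζ ≠ 0 := by positivity
  rw [subCoeff, show (k : ℝ) + (ζ - 1 / 2) + 1 = ζ + 1 / 2 + k by ring, dup,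
    show (1 : ℝ) + k = k + 1 by ring, Gamma_nat_eq_factorial]
  field_simp

theorem exists_subCoeff_bounds {ζ : ℝ} (hζ : -1 / 2 < ζ) :
    ∃ m M : ℝ, 0 < m ∧ 0 < M ∧ ∀ k, m ≤ subCoeff ζ k ∧ subCoeff ζ k ≤ M := by
  have lim := tendsto_subCoeff hζ
  have hL : (2 : ℝ) ^ ζ / √π ≠ 0 := by positivity
  obtain ⟨M, hM⟩ := lim.bddAbove_range
  obtain ⟨N, hN⟩ := (lim.inv₀ hL).bddAbove_range
  have hM' : ∀ k, subCoeff ζ k ≤ M := fun k => hM ⟨k, rfl⟩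
  have hN' : ∀ k, (subCoeff ζ k)⁻¹ ≤ N := fun k => hN ⟨k, rfl⟩
  have hN0 : 0 < N := (inv_pos.mpr (subCoeff_pos hζ 0)).trans_le (hN' 0)
  refine ⟨N⁻¹, M, inv_pos.mpr hN0, (subCoeff_pos hζ 0).trans_le (hM' 0), fun k => ⟨?_, hM' k⟩⟩
  exact inv_le_of_inv_le₀ (subCoeff_pos hζ k) (hN' k)

theorem integral_rpow_mul_exp_neg_div_Ioi {p B : ℝ} (hp : 0 < p) (hB : 0 < B) :
    ∫ τ in Ioi (0 : ℝ), τ ^ (-p - 1) * exp (-B / τ) = (1 / B) ^ p * Gamma p := by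
  rw [← integral_rpow_mul_exp_neg_mul_Ioi hp hB,
    ← integral_comp_rpow_Ioi (fun x => x ^ (p - 1) * exp (-(B * x))) (p := -1) (by norm_num)]
  refine setIntegral_congr_fun measurableSet_Ioi fun τ hτ => ?_
  have hτ : 0 < τ := hτ
  simp only [smul_eq_mul, abs_neg, abs_one, one_mul]
  rw [← rpow_mul hτ.le, ← mul_assoc, ← rpow_add hτ, rpow_neg_one, ← div_eq_mul_inv, neg_div]
  ring_nf

theorem integrableOn_rpow_mul_exp_neg_div_Ioi {p B : ℝ} (hp : 0 < p) (hB : 0 < B) :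
    IntegrableOn (fun τ : ℝ => τ ^ (-p - 1) * exp (-B / τ)) (Ioi 0) := by
  refine Integrable.of_integral_ne_zero ?_
  rw [integral_rpow_mul_exp_neg_div_Ioi hp hB]
  have := Gamma_pos_of_pos hp
  positivity

/-- The `k`-th term of the integrand of `subKernel1`, after expanding the Bessel function. -/
noncomputable def subTerm (ζ t r s : ℝ) (k : ℕ) (τ : ℝ) : ℝ :=
  t / (4 * √π) * (r * s) ^ (2 * k) / (4 ^ (2 * (k : ℝ) + (ζ - 1 / 2)) *
    (k.factorial * Gamma (k + (ζ - 1 / 2) + 1))) *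
      (τ ^ (-(2 * k + ζ + 1) - 1) * exp (-((r ^ 2 + s ^ 2 + t ^ 2) / 4) / τ))

theorem besselHeat_mul_levyDensity (ζ : ℝ) {t r s τ : ℝ} (hr : 0 < r) (hs : 0 < s)
    (hτ : 0 < τ) : besselHeat ζ τ r s * levyDensity t τ = ∑' k, subTerm ζ t r s k τ := by
  rw [besselHeat, besselI, levyDensity, ← tsum_mul_left, ← tsum_mul_right]
  refine tsum_congr fun k => ?_
  have hrs : 0 < r * s := mul_pos hr hs
  have e : exp (-((r ^ 2 + s ^ 2 + t ^ 2) / 4) / τ)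
      = exp (-(r ^ 2 + s ^ 2) / (4 * τ)) * exp (-t ^ 2 / (4 * τ)) := by
    rw [← exp_add]
    congr 1
    field_simp
    ring
  have h1 : (r * s / (2 * τ) / 2) ^ (2 * (k : ℝ) + (ζ - 1 / 2))
      = (r * s) ^ (2 * (k : ℝ) + (ζ - 1 / 2)) / (4 ^ (2 * (k : ℝ) + (ζ - 1 / 2)) *
        τ ^ (2 * (k : ℝ) + (ζ - 1 / 2))) := by
    rw [show r * s / (2 * τ) / 2 = r * s / (4 * τ) by field_simp; norm_num,
      div_rpow hrs.le (by positivity), mul_rpow (by norm_num) hτ.le]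
  have h2 : (r * s) ^ (2 * k) = (r * s) ^ (1 / 2 - ζ) * (r * s) ^ (2 * (k : ℝ) + (ζ - 1 / 2)) := by
    rw [← rpow_add hrs, ← rpow_natCast]
    congr 1
    push_cast
    ring
  have h3 : τ ^ (-(2 * (k : ℝ) + ζ + 1) - 1)
      = (τ * τ ^ ((3 : ℝ) / 2) * τ ^ (2 * (k : ℝ) + (ζ - 1 / 2)))⁻¹ := by
    rw [← rpow_one_add' hτ.le (by norm_num), ← rpow_add hτ, ← rpow_neg hτ.le]
    congr 1
    ring
  rw [subTerm, e, h1, h2, h3]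
  generalize Gamma (k + (ζ - 1 / 2) + 1) = G
  simp only [div_eq_mul_inv, mul_inv]
  ring

theorem integrableOn_subTerm {ζ t r s : ℝ} (hζ : -1 / 2 < ζ) (ht : 0 < t) (k : ℕ) :
    IntegrableOn (subTerm ζ t r s k) (Ioi 0) := by
  have hk : (0 : ℝ) ≤ k := k.cast_nonneg
  exact (integrableOn_rpow_mul_exp_neg_div_Ioi (by linarith) (by positivity)).const_mul _

theorem subTerm_nonneg {ζ t r s τ : ℝ} (hζ : -1 / 2 < ζ) (ht : 0 < t) (hτ : 0 < τ) (k : ℕ) :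
    0 ≤ subTerm ζ t r s k τ := by
  have hk : (0 : ℝ) ≤ k := k.cast_nonneg
  have h2 : 0 < Gamma (k + (ζ - 1 / 2) + 1) := Gamma_pos_of_pos (by linarith)
  have h3 : 0 ≤ (r * s) ^ (2 * k) := (even_two_mul k).pow_nonneg _
  unfold subTerm
  positivity

theorem integral_subTerm {ζ t r s : ℝ} (hζ : -1 / 2 < ζ) (ht : 0 < t) (k : ℕ) :
    ∫ τ in Ioi (0 : ℝ), subTerm ζ t r s k τ =
      2 / √π * t / (r ^ 2 + s ^ 2 + t ^ 2) ^ (ζ + 1) *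
        (subCoeff ζ k * ((2 * (r * s) / (r ^ 2 + s ^ 2 + t ^ 2)) ^ 2) ^ k) := by
  have hk : (0 : ℝ) ≤ k := k.cast_nonneg
  have hA : 0 < r ^ 2 + s ^ 2 + t ^ 2 := by positivity
  have h2 : Gamma (k + (ζ - 1 / 2) + 1) ≠ 0 := (Gamma_pos_of_pos (by linarith)).ne'
  unfold subTerm
  rw [integral_const_mul, integral_rpow_mul_exp_neg_div_Ioi (by linarith) (by positivity), subCoeff]
  generalize r ^ 2 + s ^ 2 + t ^ 2 = A at *
  have hpow : (1 / (A / 4)) ^ (2 * (k : ℝ) + ζ + 1)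
      = 8 * 4 ^ (2 * (k : ℝ) + (ζ - 1 / 2)) / (A ^ (ζ + 1) * A ^ (2 * k)) := by
    have h8 : (8 : ℝ) = 4 ^ ((3 : ℝ) / 2) := by
      rw [show (4 : ℝ) = 2 ^ (2 : ℝ) by norm_num, ← rpow_mul zero_le_two]
      norm_num
    rw [one_div_div, div_rpow (by norm_num) hA.le, h8, ← rpow_add (by norm_num),
      ← rpow_natCast, ← rpow_add hA]
    congr 2
    · ring
    · push_cast
      ring
  have h4 : (2 * (r * s) / A) ^ (2 * k) = 4 ^ k * (r * s) ^ (2 * k) / A ^ (2 * k) := by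
    rw [div_pow, mul_pow, pow_mul 2]
    norm_num
  rw [hpow, ← pow_mul, h4]
  have : (4 : ℝ) ^ (2 * (k : ℝ) + (ζ - 1 / 2)) ≠ 0 := by positivity
  have : A ^ (ζ + 1) ≠ 0 := by positivity
  generalize Gamma (k + (ζ - 1 / 2) + 1) = G at *
  field_simp
  ring

theorem hasSum_subKernel1 {ζ t r s : ℝ} (hζ : -1 / 2 < ζ) (hr : 0 < r) (hs : 0 < s) (ht : 0 < t)
    (hsum : Summable fun k =>
      subCoeff ζ k * ((2 * (r * s) / (r ^ 2 + s ^ 2 + t ^ 2)) ^ 2) ^ k) :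
    HasSum (fun k => 2 / √π * t / (r ^ 2 + s ^ 2 + t ^ 2) ^ (ζ + 1) *
        (subCoeff ζ k * ((2 * (r * s) / (r ^ 2 + s ^ 2 + t ^ 2)) ^ 2) ^ k))
      (subKernel1 ζ t r s) := by
  have hnorm : ∀ k, ∫ τ in Ioi (0 : ℝ), ‖subTerm ζ t r s k τ‖
      = ∫ τ in Ioi (0 : ℝ), subTerm ζ t r s k τ := fun k =>
    setIntegral_congr_fun measurableSet_Ioi fun τ hτ => norm_of_nonneg (subTerm_nonneg hζ ht hτ k)
  have key := hasSum_integral_of_summable_integral_norm (μ := volume.restrict (Ioi (0 : ℝ)))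
    (F := subTerm ζ t r s) (integrableOn_subTerm hζ ht)
    (by simpa only [hnorm, integral_subTerm hζ ht] using hsum.mul_left _)
  simp only [integral_subTerm hζ ht] at key
  rwa [subKernel1, setIntegral_congr_fun measurableSet_Ioi
    fun τ hτ => besselHeat_mul_levyDensity ζ hr hs hτ]

theorem stmt8 (ζ : ℝ) (hζ : -1/2 < ζ) :
    ∃ c C : ℝ, 0 < c ∧ 0 < C ∧
      ∀ r s t : ℝ, 0 < r → 0 < s → 0 < t →
        c * t / ((r ^ 2 + s ^ 2 + t ^ 2) ^ ζ * ((r - s) ^ 2 + t ^ 2))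
            ≤ subKernel1 ζ t r s ∧
          subKernel1 ζ t r s
            ≤ C * t / ((r ^ 2 + s ^ 2 + t ^ 2) ^ ζ * ((r - s) ^ 2 + t ^ 2)) := by
  obtain ⟨m, M, hm, hM, hmM⟩ := exists_subCoeff_bounds hζ
  refine ⟨m / √π, 2 * M / √π, by positivity, by positivity, fun r s t hr hs ht => ?_⟩
  have hA : 0 < r ^ 2 + s ^ 2 + t ^ 2 := by positivity
  have hD : 0 < (r - s) ^ 2 + t ^ 2 := by positivity
  have hAD : r ^ 2 + s ^ 2 + t ^ 2 - 2 * (r * s) = (r - s) ^ 2 + t ^ 2 := by ring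
  have hsubKernel := hasSum_subKernel1 hζ hr hs ht
  generalize r ^ 2 + s ^ 2 + t ^ 2 = A at *
  generalize (r - s) ^ 2 + t ^ 2 = D at *
  set z := 2 * (r * s) / A with hz
  have hz0 : 0 < z := by positivity
  have hz1 : 1 - z = D / A := by
    rw [hz, ← hAD]
    field_simp
  have hDA : 0 < D / A := by positivity
  have hzlt : z ^ 2 < 1 := by nlinarith
  have geom := hasSum_geometric_of_lt_one (sq_nonneg z) hzlt
  have hsum : Summable fun k => subCoeff ζ k * (z ^ 2) ^ k :=
    Summable.of_nonneg_of_le (fun k => mul_nonneg (subCoeff_pos hζ k).le (by positivity))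
      (fun k => mul_le_mul_of_nonneg_right (hmM k).2 (by positivity)) (geom.summable.mul_left M)
  have key := hsubKernel hsum
  have hK : 0 < 2 / √π * t / A ^ (ζ + 1) := by positivity
  have lower := hasSum_le (fun k => mul_le_mul_of_nonneg_left
    (mul_le_mul_of_nonneg_right (hmM k).1 (by positivity)) hK.le)
    ((geom.mul_left m).mul_left (2 / √π * t / A ^ (ζ + 1))) key
  have upper := hasSum_le (fun k => mul_le_mul_of_nonneg_left
    (mul_le_mul_of_nonneg_right (hmM k).2 (by positivity)) hK.le)
    key ((geom.mul_left M).mul_left (2 / √π * t / A ^ (ζ + 1)))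
  have low : A / (2 * D) ≤ (1 - z ^ 2)⁻¹ := by
    rw [show A / (2 * D) = (2 * (D / A))⁻¹ by field_simp]
    exact inv_anti₀ (by linarith) (by nlinarith)
  have upp : (1 - z ^ 2)⁻¹ ≤ A / D := by
    rw [← inv_div]
    exact inv_anti₀ hDA (by nlinarith)
  have hrp : A ^ (ζ + 1) = A ^ ζ * A := rpow_add_one hA.ne' ζ
  have hAζ : 0 < A ^ ζ := by positivity
  constructor
  · refine le_trans (le_of_eq ?_) ((mul_le_mul_of_nonneg_left
      (mul_le_mul_of_nonneg_left low hm.le) hK.le).trans lower)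
    rw [hrp]
    field_simp
  · refine (upper.trans (mul_le_mul_of_nonneg_left
      (mul_le_mul_of_nonneg_left upp hM.le) hK.le)).trans (le_of_eq ?_)
    rw [hrp]
    field_simp
end
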